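/- Let k ≥ 2 be an integer and j ∈ {1,…,k−1}. With high probability, for all p < p_{M_j} simultaneously, the complex G_p is not F_2-cohomologically j-connected, i.e. H^0(G_p;F_2) ≇ F_2 or H^i(G_p;F_2) ≠ 0 for some i ∈ {1,…,j}. -/

import Mathlib

open MeasureTheory Filter

attribute [local instance] Classical.propDecidable

namespace RSC

variable {V : Type*}

/-- `A` is an `i`-dimensional simplex of the complex `G`. -/
def IsSimplex (G : Set (Finset V)) (i : ℕ) (A : Finset V) : Prop :=
  A ∈ G ∧ A.card = i + 1

/-- A `k`-dimensional simplicial complex on vertex set `V`. -/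
structure IsKComplex (G : Set (Finset V)) (k : ℕ) : Prop where
  down : ∀ A ∈ G, ∀ B, B ⊆ A → B.Nonempty → B ∈ G
  singletons : ∀ v : V, ({v} : Finset V) ∈ G
  dim : ∀ A ∈ G, A.card ≤ k + 1

/-- `i`-cochains with `F₂`-coefficients. -/
abbrev Cochain (G : Set (Finset V)) (i : ℕ) : Type _ :=
  {A : Finset V // IsSimplex G i A} → ZMod 2

/-- The coboundary map `δ^i : C^i(G) → C^{i+1}(G)`. -/
noncomputable def coboundary (G : Set (Finset V)) (i : ℕ) :
    Cochain G i →ₗ[ZMod 2] Cochain G (i + 1) where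
  toFun f := fun σ => ∑ τ ∈ Finset.powersetCard (i + 1) (σ : Finset V),
      if h : IsSimplex G i τ then f ⟨τ, h⟩ else 0
  map_add' f g := by
    funext σ
    simp only [Pi.add_apply, ← Finset.sum_add_distrib]
    refine Finset.sum_congr rfl fun τ _ => ?_
    by_cases h : IsSimplex G i τ <;> simp [h]
  map_smul' c f := by
    funext σ
    simp only [Pi.smul_apply, RingHom.id_apply, Finset.smul_sum]
    refine Finset.sum_congr rfl fun τ _ => ?_
    by_cases h : IsSimplex G i τ <;> simp [h]

/-- The submodule of `i`-cocycles. -/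
noncomputable def cocycles (G : Set (Finset V)) (i : ℕ) : Submodule (ZMod 2) (Cochain G i) :=
  LinearMap.ker (coboundary G i)

/-- The submodule of `i`-coboundaries (`δ^{-1}` is the zero map). -/
noncomputable def coboundaries (G : Set (Finset V)) : (i : ℕ) → Submodule (ZMod 2) (Cochain G i)
  | 0 => ⊥
  | (i + 1) => LinearMap.range (coboundary G i)

/-- The `i`-th cohomology group `H^i(G;F₂) = ker δ^i / im δ^{i-1}`. -/
noncomputable abbrev cohomology (G : Set (Finset V)) (i : ℕ) :=
  (cocycles G i) ⧸ ((coboundaries G i).comap (cocycles G i).subtype)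

/-- `F₂`-cohomological `j`-connectedness: `H^0 ≅ F₂` and `H^i = 0` for `1 ≤ i ≤ j`. -/
def CohomConnected (G : Set (Finset V)) (j : ℕ) : Prop :=
  Nonempty (cohomology G 0 ≃ₗ[ZMod 2] ZMod 2) ∧
    ∀ i, 1 ≤ i → i ≤ j → Subsingleton (cohomology G i)

/-- The `j`-flower in `K` with centre `C`: the set of petals `C ∪ {w}`, `w ∈ K \ C`. -/
def Flower [DecidableEq V] (K C : Finset V) : Set (Finset V) :=
  {P | ∃ w ∈ K \ C, P = insert w C}

/-- A copy of `M_j^-`: a `k`-simplex `K` together with a `(j-1)`-simplex `C ⊆ K` such that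
each petal of the flower `F(K,C)` is contained in no `k`-simplex other than `K`. -/
def IsMjMinus [DecidableEq V] (G : Set (Finset V)) (k j : ℕ) (K C : Finset V) : Prop :=
  IsSimplex G k K ∧ C ∈ G ∧ C.card = j ∧ C ⊆ K ∧
    ∀ P ∈ Flower K C, ∀ K', IsSimplex G k K' → P ⊆ K' → K' = K

/-- A `j`-cycle: every `(j-1)`-simplex lies in an even number of members of `J`. -/
def IsCycle (G : Set (Finset V)) (j : ℕ) (J : Finset (Finset V)) : Prop :=
  (∀ σ ∈ J, IsSimplex G j σ) ∧
    ∀ τ : Finset V, τ.card = j → Even (J.filter (fun σ => τ ⊆ σ)).card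

/-- A copy of `M_j`. -/
def IsMj [DecidableEq V] (G : Set (Finset V)) (k j : ℕ) (K C : Finset V)
    (J : Finset (Finset V)) : Prop :=
  IsMjMinus G k j K C ∧ IsCycle G j J ∧ ∃! P : Finset V, P ∈ J ∧ P ∈ Flower K C

/-- A `j`-shell: a `(j+2)`-set all of whose `(j+1)`-subsets are `j`-simplices. -/
def IsShell (G : Set (Finset V)) (j : ℕ) (A : Finset V) : Prop :=
  A.card = j + 2 ∧ ∀ τ ⊆ A, τ.card = j + 1 → τ ∈ G

/-- A copy of `M_j^*`. -/
def IsMjStar [DecidableEq V] (G : Set (Finset V)) (k j : ℕ) (K C : Finset V) (w a : V) : Prop :=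
  IsMjMinus G k j K C ∧ w ∈ K \ C ∧ a ∉ K ∧ IsShell G j (insert a (insert w C))

/-- The support of a cochain. -/
def cochainSupport {G : Set (Finset V)} {i : ℕ} (f : Cochain G i) : Set (Finset V) :=
  {A | ∃ h : IsSimplex G i A, f ⟨A, h⟩ = 1}

/-- A cochain arising from a copy of `M_j^-`: its support is the flower `F(K,C)`. -/
def ArisesFrom [DecidableEq V] (G : Set (Finset V)) (k j : ℕ) (f : Cochain G j)
    (K C : Finset V) : Prop :=
  IsMjMinus G k j K C ∧ cochainSupport f = Flower K C

/-- A `j`-cocycle generated by copies of `M_j^-`: it differs by a `j`-coboundary from a sum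
of `j`-cocycles arising from copies of `M_j^-`. -/
def GeneratedByMjMinus [DecidableEq V] (G : Set (Finset V)) (k j : ℕ) (f : Cochain G j) : Prop :=
  ∃ (m : ℕ) (fs : Fin m → Cochain G j),
    (∀ i, ∃ K C, ArisesFrom G k j (fs i) K C) ∧
      f - (∑ i, fs i) ∈ coboundaries G j

/-- Membership in `N_G`: a `j`-cocycle not generated by copies of `M_j^-`. -/
def InNG [DecidableEq V] (G : Set (Finset V)) (k j : ℕ) (f : Cochain G j) : Prop :=
  f ∈ cocycles G j ∧ ¬ GeneratedByMjMinus G k j f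

/-- Traversability: the transitive closure of "lying in a common `k`-simplex" is `S × S`. -/
def Traversable (G : Set (Finset V)) (k : ℕ) (S : Set (Finset V)) : Prop :=
  ∀ σ₁ ∈ S, ∀ σ₂ ∈ S,
    Relation.TransGen
      (fun a b => a ∈ S ∧ b ∈ S ∧ ∃ K, IsSimplex G k K ∧ a ⊆ K ∧ b ⊆ K) σ₁ σ₂

/-- A local obstacle: a `k`-simplex containing at least `k-j+1` many `j`-simplices,
each lying in no other `k`-simplex. -/
def IsLocalObstacle (G : Set (Finset V)) (k j : ℕ) (K : Finset V) : Prop :=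
  IsSimplex G k K ∧
    k - j + 1 ≤ {σ : Finset V | IsSimplex G j σ ∧ σ ⊆ K ∧
      ∀ K', IsSimplex G k K' → σ ⊆ K' → K' = K}.ncard

/-- The random complex `G_p` given birth times `t`: all singletons together with all
non-empty subsets of `(k+1)`-sets with birth time at most `p`. -/
def complexAt (k n : ℕ) (t : Finset (Fin n) → ℝ) (p : ℝ) : Set (Finset (Fin n)) :=
  {A | (∃ v, A = {v}) ∨
    (A.Nonempty ∧ ∃ K : Finset (Fin n), K.card = k + 1 ∧ t K ≤ p ∧ A ⊆ K)}

/-- The distribution of birth times: i.i.d. uniform on `[0,1]`. -/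
noncomputable def birthMeasure (n : ℕ) : Measure (Finset (Fin n) → ℝ) :=
  Measure.pi fun _ => volume.restrict (Set.Icc (0 : ℝ) 1)

/-- `p_{M_j}`: the supremum of the probabilities `p ∈ [0,1]` at which `G_p` contains
a copy of `M_j`. -/
noncomputable def pMj (k j n : ℕ) (t : Finset (Fin n) → ℝ) : ℝ :=
  sSup {p : ℝ | p ∈ Set.Icc (0 : ℝ) 1 ∧
    ∃ K C J, IsMj (complexAt k n t p) k j K C J}

/-- The threshold `p_j`. -/
noncomputable def pjThreshold (k j n : ℕ) : ℝ :=
  ((j + 1 : ℝ) * Real.log n + Real.log (Real.log n)) * (Nat.factorial (k - j)) /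
    (((k - j + 1 : ℕ) : ℝ) * (n : ℝ) ^ (k - j))

/-- `p_j^-`. -/
noncomputable def pjMinus (k j n : ℕ) : ℝ :=
  (1 - 1 / Real.sqrt (Real.log n)) * ((j + 1 : ℝ) * Real.log n) * (Nat.factorial (k - j)) /
    (((k - j + 1 : ℕ) : ℝ) * (n : ℝ) ^ (k - j))

/-- `p_{j-1}^-`. -/
noncomputable def pjPrevMinus (k j n : ℕ) : ℝ :=
  (1 - 1 / Real.sqrt (Real.log n)) * ((j : ℝ) * Real.log n) * (Nat.factorial (k - j + 1)) /
    (((k - j + 2 : ℕ) : ℝ) * (n : ℝ) ^ (k - j + 1))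

/-- `p_j^{(1)}`. -/
noncomputable def pjOne (k j n : ℕ) : ℝ :=
  1 / (10 * ((j : ℝ) + 1) * (Nat.choose (k + 1) (j + 1)) * (n : ℝ) ^ (k - j))

/-- The number of copies of `M_j^-` in `G`. -/
noncomputable def countMjMinus (k j : ℕ) {n : ℕ} (G : Set (Finset (Fin n))) : ℕ :=
  {x : Finset (Fin n) × Finset (Fin n) | IsMjMinus G k j x.1 x.2}.ncard

/-- The number of copies of `M_j^*` in `G`. -/
noncomputable def countMjStar (k j : ℕ) {n : ℕ} (G : Set (Finset (Fin n))) : ℕ :=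
  {x : Finset (Fin n) × Finset (Fin n) × Fin n × Fin n |
    IsMjStar G k j x.1 x.2.1 x.2.2.1 x.2.2.2}.ncard


end RSC

namespace RSC

instance isProb_unif : IsProbabilityMeasure (volume.restrict (Set.Icc (0:ℝ) 1)) :=
  ⟨by simp⟩

instance isProb_birth (n : ℕ) : IsProbabilityMeasure (birthMeasure n) := by
  unfold birthMeasure; infer_instance

lemma prob_box (n : ℕ) (S1 S2 : Finset (Finset (Fin n))) (hd : Disjoint S1 S2) (a b : ℝ)
    (ha0 : 0 ≤ a) (ha1 : a ≤ 1) (hb0 : 0 ≤ b) (hb1 : b ≤ 1) :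
    (birthMeasure n).real {t | (∀ K ∈ S1, t K ≤ a) ∧ ∀ K ∈ S2, b < t K}
      = a ^ S1.card * (1 - b) ^ S2.card := by
  have hset : {t : Finset (Fin n) → ℝ | (∀ K ∈ S1, t K ≤ a) ∧ ∀ K ∈ S2, b < t K}
      = Set.pi Set.univ (fun K => (if K ∈ S1 then Set.Iic a else Set.univ) ∩
          (if K ∈ S2 then Set.Ioi b else Set.univ)) := by
    ext t
    simp only [Set.mem_ofPred_eq, Set.mem_pi, Set.mem_univ, forall_true_left, Set.mem_inter_iff]
    constructor
    · rintro ⟨h1, h2⟩ K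
      constructor
      · split_ifs with h
        · exact h1 K h
        · trivial
      · split_ifs with h
        · exact h2 K h
        · trivial
    · intro h
      refine ⟨fun K hK => ?_, fun K hK => ?_⟩
      · have := (h K).1
        rw [if_pos hK] at this
        exact this
      · have := (h K).2
        rw [if_pos hK] at this
        exact this
  rw [hset, measureReal_def, birthMeasure, Measure.pi_pi, ENNReal.toReal_prod]
  have hval : ∀ K : Finset (Fin n),
      ((volume.restrict (Set.Icc (0:ℝ) 1)) ((if K ∈ S1 then Set.Iic a else Set.univ) ∩
          (if K ∈ S2 then Set.Ioi b else Set.univ))).toReal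
        = (if K ∈ S1 then a else 1) * (if K ∈ S2 then 1 - b else 1) := by
    intro K
    have hnot : K ∈ S1 → K ∉ S2 := fun h => Finset.disjoint_left.mp hd h
    by_cases h1 : K ∈ S1
    · have h2 := hnot h1
      simp only [h1, h2, if_true, if_false, Set.inter_univ, mul_one]
      rw [Measure.restrict_apply measurableSet_Iic]
      have : Set.Iic a ∩ Set.Icc (0:ℝ) 1 = Set.Icc 0 a := by
        ext x; simp only [Set.mem_inter_iff, Set.mem_Iic, Set.mem_Icc]
        constructor
        · rintro ⟨h, h', h''⟩; exact ⟨h', h⟩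
        · rintro ⟨h, h'⟩; exact ⟨h', h, h'.trans ha1⟩
      rw [this, Real.volume_Icc, ENNReal.toReal_ofReal (by linarith)]; ring
    · by_cases h2 : K ∈ S2
      · simp only [h1, h2, if_true, if_false, Set.univ_inter, one_mul]
        rw [Measure.restrict_apply measurableSet_Ioi]
        have : Set.Ioi b ∩ Set.Icc (0:ℝ) 1 = Set.Ioc b 1 := by
          ext x; simp only [Set.mem_inter_iff, Set.mem_Ioi, Set.mem_Icc, Set.mem_Ioc]
          constructor
          · rintro ⟨h, h', h''⟩; exact ⟨h, h''⟩
          · rintro ⟨h, h'⟩; exact ⟨h, hb0.trans h.le, h'⟩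
        rw [this, Real.volume_Ioc, ENNReal.toReal_ofReal (by linarith)]
      · simp [h1, h2]
  rw [Finset.prod_congr rfl (fun K _ => hval K), Finset.prod_mul_distrib]
  simp [Finset.prod_ite_mem]

lemma measurable_box (n : ℕ) (S1 S2 : Finset (Finset (Fin n))) (a b : ℝ) :
    MeasurableSet {t : Finset (Fin n) → ℝ | (∀ K ∈ S1, t K ≤ a) ∧ ∀ K ∈ S2, b < t K} := by
  apply MeasurableSet.inter
  · have : {t : Finset (Fin n) → ℝ | ∀ K ∈ S1, t K ≤ a} = ⋂ K ∈ S1, {t | t K ≤ a} := by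
      ext; simp
    change MeasurableSet {t : Finset (Fin n) → ℝ | ∀ K ∈ S1, t K ≤ a}
    rw [this]
    exact Finset.measurableSet_biInter _
      (fun K _ => measurableSet_le (measurable_pi_apply K) measurable_const)
  · have : {t : Finset (Fin n) → ℝ | ∀ K ∈ S2, b < t K} = ⋂ K ∈ S2, {t | b < t K} := by
      ext; simp
    change MeasurableSet {t : Finset (Fin n) → ℝ | ∀ K ∈ S2, b < t K}
    rw [this]
    exact Finset.measurableSet_biInter _
      (fun K _ => measurableSet_lt measurable_const (measurable_pi_apply K))

lemma second_moment {Ω : Type*} [MeasurableSpace Ω] (μ : Measure Ω) [IsProbabilityMeasure μ]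
    {ι : Type*} (I : Finset ι) (E : ι → Set Ω) (hE : ∀ i, MeasurableSet (E i))
    (q η : ℝ) (hq : 0 < q) (h1 : ∀ i ∈ I, μ.real (E i) = q)
    (hη : 0 ≤ η)
    (h2 : ∀ i ∈ I, ∀ j ∈ I, i ≠ j → μ.real (E i ∩ E j) ≤ (1 + η) * q ^ 2)
    (hI : 0 < I.card) :
    μ.real {ω | ((I.filter (fun i => ω ∈ E i)).card : ℝ) ≤ I.card * q / 2}
      ≤ 4 * (1 / (I.card * q) + η) := by
  have hN : (0:ℝ) < I.card := by exact_mod_cast hI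
  set N : ℝ := (I.card : ℝ) with hNdef
  let X : Ω → ℝ := fun ω => ∑ i ∈ I, (E i).indicator (fun _ => (1:ℝ)) ω
  have hX : ∀ ω, X ω = ((I.filter (fun i => ω ∈ E i)).card : ℝ) := by
    intro ω
    simp only [X, Set.indicator_apply]
    rw [Finset.sum_ite]
    simp
  have hind : ∀ i, Integrable ((E i).indicator (fun _ => (1:ℝ))) μ := fun i =>
    (integrable_const (1:ℝ)).indicator (hE i)
  have hind2 : ∀ i j, Integrable ((E i ∩ E j).indicator (fun _ => (1:ℝ))) μ := fun i j =>
    (integrable_const (1:ℝ)).indicator ((hE i).inter (hE j))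
  have hIndic : ∀ A : Set Ω, MeasurableSet A → ∫ ω, A.indicator (fun _ => (1:ℝ)) ω ∂μ = μ.real A := by
    intro A hA
    rw [integral_indicator hA]; simp
  have hXsq : ∀ ω, (X ω - N * q) ^ 2 = (∑ i ∈ I, ∑ j ∈ I, (E i ∩ E j).indicator (fun _ => (1:ℝ)) ω)
      - 2 * (N * q) * (∑ i ∈ I, (E i).indicator (fun _ => (1:ℝ)) ω) + (N * q) ^ 2 := by
    intro ω
    have : (∑ i ∈ I, ∑ j ∈ I, (E i ∩ E j).indicator (fun _ => (1:ℝ)) ω) = X ω * X ω := by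
      simp only [X]
      rw [Finset.sum_mul_sum]
      refine Finset.sum_congr rfl fun i _ => Finset.sum_congr rfl fun j _ => ?_
      by_cases h : ω ∈ E i <;> by_cases h' : ω ∈ E j <;> simp [h, h']
    rw [this]
    change _ = X ω * X ω - 2 * (N * q) * X ω + (N * q) ^ 2
    ring
  have hi1 : Integrable (fun ω => ∑ i ∈ I, ∑ j ∈ I, (E i ∩ E j).indicator (fun _ => (1:ℝ)) ω) μ :=
    integrable_finsetSum _ fun i _ => integrable_finsetSum _ fun j _ => hind2 i j
  have hi2 : Integrable (fun ω => ∑ i ∈ I, (E i).indicator (fun _ => (1:ℝ)) ω) μ :=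
    integrable_finsetSum _ fun i _ => hind i
  have hi3 : Integrable (fun ω => (X ω - N * q) ^ 2) μ := by
    simp_rw [hXsq]
    exact (hi1.sub (hi2.const_mul _)).add (integrable_const _)
  have hcalc : ∫ ω, (X ω - N * q) ^ 2 ∂μ ≤ N * q + N ^ 2 * η * q ^ 2 := by
    simp_rw [hXsq]
    have hi4 : Integrable (fun ω => (∑ i ∈ I, ∑ j ∈ I, (E i ∩ E j).indicator (fun _ => (1:ℝ)) ω)
        - 2 * (N * q) * (∑ i ∈ I, (E i).indicator (fun _ => (1:ℝ)) ω)) μ :=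
      hi1.sub (hi2.const_mul _)
    rw [integral_add hi4 (integrable_const _),
      integral_sub hi1 (hi2.const_mul _), integral_const_mul,
      integral_finsetSum _ (fun i _ => integrable_finsetSum _ fun j _ => hind2 i j),
      integral_finsetSum _ (fun i _ => hind i)]
    have e1 : ∑ i ∈ I, ∫ ω, (E i).indicator (fun _ => (1:ℝ)) ω ∂μ = N * q := by
      rw [Finset.sum_congr rfl (fun i hi => (hIndic _ (hE i)).trans (h1 i hi))]
      simp [hNdef]
    have e2 : ∑ i ∈ I, ∫ ω, (∑ j ∈ I, (E i ∩ E j).indicator (fun _ => (1:ℝ)) ω) ∂μ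
        ≤ N * (q + N * ((1 + η) * q ^ 2)) := by
      have : ∀ i ∈ I, ∫ ω, (∑ j ∈ I, (E i ∩ E j).indicator (fun _ => (1:ℝ)) ω) ∂μ
          ≤ q + N * ((1 + η) * q ^ 2) := by
        intro i hi
        rw [integral_finsetSum _ (fun j _ => hind2 i j)]
        calc ∑ j ∈ I, ∫ ω, (E i ∩ E j).indicator (fun _ => (1:ℝ)) ω ∂μ
            ≤ ∑ j ∈ I, ((if i = j then q else 0) + (1 + η) * q ^ 2) := by
              refine Finset.sum_le_sum fun j hj => ?_
              rw [hIndic _ ((hE i).inter (hE j))]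
              have hp : 0 ≤ (1 + η) * q ^ 2 := by positivity
              split_ifs with h
              · subst h
                rw [Set.inter_self, h1 i hi]; linarith
              · rw [zero_add]; exact h2 i hi j hj h
          _ = q + N * ((1 + η) * q ^ 2) := by
              rw [Finset.sum_add_distrib, Finset.sum_ite_eq]
              simp [hi, hNdef]
      calc _ ≤ ∑ i ∈ I, (q + N * ((1 + η) * q ^ 2)) := Finset.sum_le_sum this
        _ = _ := by rw [Finset.sum_const, nsmul_eq_mul]
    rw [e1]
    simp only [integral_const, probReal_univ, one_smul]
    nlinarith
  have hM := mul_meas_ge_le_integral_of_nonneg (μ := μ) (f := fun ω => (X ω - N * q) ^ 2)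
    (Filter.Eventually.of_forall fun ω => sq_nonneg _) hi3 ((N * q / 2) ^ 2)
  have hsub : μ.real {ω | ((I.filter (fun i => ω ∈ E i)).card : ℝ) ≤ N * q / 2}
      ≤ μ.real {ω | (N * q / 2) ^ 2 ≤ (X ω - N * q) ^ 2} := by
    apply measureReal_mono
    · intro ω hω
      simp only [Set.mem_ofPred_eq] at hω ⊢
      rw [← hX] at hω
      have : 0 < N * q := by positivity
      nlinarith
    · exact measure_ne_top _ _
  have hpos : 0 < (N * q / 2) ^ 2 := by positivity
  have h3 : μ.real {ω | (N * q / 2) ^ 2 ≤ (X ω - N * q) ^ 2} ≤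
      (N * q + N ^ 2 * η * q ^ 2) / (N * q / 2) ^ 2 := by
    rw [le_div_iff₀ hpos, mul_comm]
    exact hM.trans hcalc
  refine (hsub.trans h3).trans (le_of_eq ?_)
  field_simp
  ring

end RSC

namespace RSC

/-- indicator function of the flower -/
noncomputable def fl {n : ℕ} (K C : Finset (Fin n)) (A : Finset (Fin n)) : ZMod 2 :=
  if ∃ w ∈ K \ C, A = insert w C then 1 else 0

/-- The flower `F(K,C)` is present and isolated at time `p`. -/
def Iso (k n : ℕ) (t : Finset (Fin n) → ℝ) (p : ℝ) (K C : Finset (Fin n)) : Prop :=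
  t K ≤ p ∧ ∀ K' : Finset (Fin n), K'.card = k + 1 → t K' ≤ p → C ⊆ K' →
    (∃ w ∈ K \ C, w ∈ K') → K' = K

lemma fl_sum {n : ℕ} (K C S : Finset (Fin n)) (i : ℕ) (hC : C.card = i) (hCS : C ⊆ S) :
    ∑ τ ∈ Finset.powersetCard (i + 1) S, fl K C τ = (((S ∩ K) \ C).card : ZMod 2) := by
  unfold fl
  rw [Finset.sum_boole]
  congr 1
  have : (Finset.powersetCard (i + 1) S).filter (fun τ => ∃ w ∈ K \ C, τ = insert w C)
      = ((S ∩ K) \ C).image (fun w => insert w C) := by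
    ext τ
    simp only [Finset.mem_filter, Finset.mem_powersetCard, Finset.mem_image, Finset.mem_sdiff,
      Finset.mem_inter]
    constructor
    · rintro ⟨⟨hτ, _⟩, w, ⟨hw, hwC⟩, rfl⟩
      exact ⟨w, ⟨⟨hτ (Finset.mem_insert_self _ _), hw⟩, hwC⟩, rfl⟩
    · rintro ⟨w, ⟨⟨hwS, hwK⟩, hwC⟩, rfl⟩
      refine ⟨⟨Finset.insert_subset hwS hCS, ?_⟩, w, ⟨hwK, hwC⟩, rfl⟩
      rw [Finset.card_insert_of_notMem hwC, hC]
  rw [this, Finset.card_image_of_injOn]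
  intro w hw w' hw' h
  simp only [Finset.coe_sdiff, Finset.coe_inter, Set.mem_sdiff, Set.mem_inter_iff,
    Finset.mem_coe] at hw hw'
  have : w ∈ insert w' C := by
    have h' : insert w C = insert w' C := h
    rw [← h']; exact Finset.mem_insert_self _ _
  rcases Finset.mem_insert.mp this with h | h
  · exact h
  · exact absurd h hw.2

/-- the flower cochain -/
noncomputable def flc {n : ℕ} (G : Set (Finset (Fin n))) (i : ℕ) (K C : Finset (Fin n)) :
    Cochain G i := fun A => fl K C A.1

lemma mem_complex_of_card {k n : ℕ} {t : Finset (Fin n) → ℝ} {p : ℝ} {A : Finset (Fin n)}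
    (hA : A ∈ complexAt k n t p) (h2 : 2 ≤ A.card) :
    ∃ K : Finset (Fin n), K.card = k + 1 ∧ t K ≤ p ∧ A ⊆ K := by
  rcases hA with ⟨v, rfl⟩ | ⟨_, h⟩
  · simp at h2
  · exact h

lemma sub_mem {k n : ℕ} {t : Finset (Fin n) → ℝ} {p : ℝ} {A K : Finset (Fin n)}
    (hK : K.card = k + 1) (ht : t K ≤ p) (hA : A ⊆ K) (hne : A.Nonempty) :
    A ∈ complexAt k n t p := Or.inr ⟨hne, K, hK, ht, hA⟩

lemma flc_cocycle {k n i : ℕ} {t : Finset (Fin n) → ℝ} {p : ℝ} {K C : Finset (Fin n)}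
    (hK : K.card = k + 1) (hC : C.card = i) (hCK : C ⊆ K)
    (hI : Iso k n t p K C) :
    flc (complexAt k n t p) i K C ∈ cocycles (complexAt k n t p) i := by
  rw [cocycles, LinearMap.mem_ker]
  funext σ
  obtain ⟨σ, hσ, hcard⟩ := σ
  obtain ⟨K', hK', htK', hσK'⟩ := mem_complex_of_card hσ (by omega)
  change (∑ τ ∈ Finset.powersetCard (i + 1) σ, if h : IsSimplex (complexAt k n t p) i τ then
    fl K C τ else 0) = 0
  have h1 : ∀ τ ∈ Finset.powersetCard (i + 1) σ,
      (if h : IsSimplex (complexAt k n t p) i τ then fl K C τ else 0) = fl K C τ := by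
    intro τ hτ
    rw [Finset.mem_powersetCard] at hτ
    rw [dif_pos]
    refine ⟨sub_mem hK' htK' (hτ.1.trans hσK') ?_, hτ.2⟩
    rw [← Finset.card_pos]; omega
  rw [Finset.sum_congr rfl h1]
  by_cases hex : ∃ w ∈ K \ C, insert w C ⊆ σ
  · obtain ⟨w, hw, hwσ⟩ := hex
    have hCσ : C ⊆ σ := (Finset.subset_insert _ _).trans hwσ
    have hwσ' : w ∈ σ := hwσ (Finset.mem_insert_self _ _)
    have hKK : K' = K := hI.2 K' hK' htK' (hCσ.trans hσK') ⟨w, hw, hσK' hwσ'⟩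
    subst hKK
    rw [fl_sum K' C σ i hC hCσ, Finset.inter_eq_left.mpr hσK', Finset.card_sdiff_of_subset hCσ,
      hC, hcard]
    have : i + 1 + 1 - i = 2 := by omega
    rw [this]; rfl
  · refine Finset.sum_eq_zero fun τ hτ => ?_
    rw [fl, if_neg]
    rintro ⟨w, hw, rfl⟩
    exact hex ⟨w, hw, (Finset.mem_powersetCard.mp hτ).1⟩

/-- a double sum over codimension two faces vanishes -/
lemma double_sum {n : ℕ} (S : Finset (Fin n)) (i : ℕ) (hS : S.card = i + 2)
    (g : Finset (Fin n) → ZMod 2) :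
    ∑ P ∈ Finset.powersetCard (i + 1) S, ∑ τ ∈ Finset.powersetCard i P, g τ = 0 := by
  have h1 : ∀ P ∈ Finset.powersetCard (i + 1) S, ∑ τ ∈ Finset.powersetCard i P, g τ
      = ∑ τ ∈ Finset.powersetCard i S, if τ ⊆ P then g τ else 0 := by
    intro P hP
    rw [← Finset.sum_filter]
    refine Finset.sum_congr ?_ fun _ _ => rfl
    ext τ
    simp only [Finset.mem_powersetCard, Finset.mem_filter] at hP ⊢
    constructor
    · rintro ⟨h, h'⟩; exact ⟨⟨h.trans hP.1, h'⟩, h⟩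
    · rintro ⟨⟨h, h'⟩, h''⟩; exact ⟨h'', h'⟩
  rw [Finset.sum_congr rfl h1, Finset.sum_comm]
  refine Finset.sum_eq_zero fun τ hτ => ?_
  rw [Finset.mem_powersetCard] at hτ
  rw [← Finset.sum_filter, Finset.sum_const]
  have h2 : ((Finset.powersetCard (i + 1) S).filter (fun P => τ ⊆ P)).card = 2 := by
    have : (Finset.powersetCard (i + 1) S).filter (fun P => τ ⊆ P)
        = (S \ τ).image (fun w => insert w τ) := by
      ext P
      simp only [Finset.mem_filter, Finset.mem_powersetCard, Finset.mem_image, Finset.mem_sdiff]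
      constructor
      · rintro ⟨⟨hP, hc⟩, hτP⟩
        have : (P \ τ).card = 1 := by rw [Finset.card_sdiff_of_subset hτP]; omega
        obtain ⟨w, hw⟩ := Finset.card_eq_one.mp this
        have hwm : w ∈ P \ τ := by rw [hw]; simp
        rw [Finset.mem_sdiff] at hwm
        refine ⟨w, ⟨hP hwm.1, hwm.2⟩, ?_⟩
        have := Finset.sdiff_union_of_subset hτP
        rw [hw] at this
        rw [← this]; rfl
      · rintro ⟨w, ⟨hwS, hwτ⟩, rfl⟩
        refine ⟨⟨Finset.insert_subset hwS hτ.1, ?_⟩, Finset.subset_insert _ _⟩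
        rw [Finset.card_insert_of_notMem hwτ, hτ.2]
    rw [this, Finset.card_image_of_injOn, Finset.card_sdiff_of_subset hτ.1]
    · omega
    · intro w hw w' hw' h
      simp only [Finset.coe_sdiff, Set.mem_sdiff, Finset.mem_coe] at hw hw'
      have : w ∈ insert w' τ := by
        have h' : insert w τ = insert w' τ := h
        rw [← h']; exact Finset.mem_insert_self _ _
      rcases Finset.mem_insert.mp this with h | h
      · exact h
      · exact absurd h hw.2
  rw [h2, two_nsmul]
  exact CharTwo.add_self_eq_zero _

/-- isolated flower together with a shell obstructs connectedness -/
lemma not_conn_of_shell {k n j : ℕ} (hj : 1 ≤ j) {t : Finset (Fin n) → ℝ} {p : ℝ}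
    {K C : Finset (Fin n)} {w a : Fin n}
    (hK : K.card = k + 1) (hC : C.card = j) (hCK : C ⊆ K)
    (hI : Iso k n t p K C) (hw : w ∈ K \ C) (ha : a ∉ K)
    (hS : ∀ P ∈ Finset.powersetCard (j + 1) (insert a (insert w C)), P ∈ complexAt k n t p) :
    ¬ CohomConnected (complexAt k n t p) j := by
  rintro ⟨-, h⟩
  have hsub := h j hj le_rfl
  obtain ⟨j, rfl⟩ : ∃ j', j = j' + 1 := ⟨j - 1, by omega⟩
  set G := complexAt k n t p with hG
  set f := flc G (j + 1) K C with hf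
  have hcoc : f ∈ cocycles G (j + 1) := flc_cocycle hK hC hCK hI
  have hcob : f ∈ coboundaries G (j + 1) := by
    have := Submodule.Quotient.subsingleton_iff.mp hsub
    have hm : (⟨f, hcoc⟩ : cocycles G (j + 1)) ∈
        (coboundaries G (j + 1)).comap (cocycles G (j + 1)).subtype := by rw [this]; trivial
    exact hm
  obtain ⟨g, hg⟩ := hcob
  rw [Finset.mem_sdiff] at hw
  set S := insert a (insert w C) with hSdef
  have haC : a ∉ C := fun h => ha (hCK h)
  have haw : a ≠ w := fun h => ha (h ▸ hw.1)
  have hScard : S.card = (j + 1) + 2 := by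
    rw [hSdef, Finset.card_insert_of_notMem, Finset.card_insert_of_notMem hw.2, hC]
    simp [haw, haC]
  have hCS : C ⊆ S := (Finset.subset_insert _ _).trans (Finset.subset_insert _ _)
  have e1 : ∑ P ∈ Finset.powersetCard (j + 1 + 1) S, fl K C P = 1 := by
    rw [fl_sum K C S (j + 1) hC hCS]
    have : (S ∩ K) \ C = {w} := by
      ext x
      simp only [hSdef, Finset.mem_sdiff, Finset.mem_inter, Finset.mem_insert,
        Finset.mem_singleton]
      constructor
      · rintro ⟨⟨rfl | rfl | h, h2⟩, h3⟩
        · exact absurd h2 ha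
        · rfl
        · exact absurd h h3
      · rintro rfl
        exact ⟨⟨Or.inr (Or.inl rfl), hw.1⟩, hw.2⟩
    rw [this]; simp
  have e2 : ∀ P ∈ Finset.powersetCard (j + 1 + 1) S, fl K C P =
      ∑ τ ∈ Finset.powersetCard (j + 1) P, (if h : IsSimplex G j τ then g ⟨τ, h⟩ else 0) := by
    intro P hP
    have hPG := hS P hP
    have := congrFun hg ⟨P, hPG, (Finset.mem_powersetCard.mp hP).2⟩
    exact this.symm
  rw [Finset.sum_congr rfl e2, double_sum S (j + 1) hScard] at e1
  exact zero_ne_one e1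

/-- many isolated flowers obstruct connectedness by dimension counting -/
lemma not_conn_of_many {k n i j : ℕ} (hij : i ≤ j) (hik : i < k)
    {t : Finset (Fin n) → ℝ} {p : ℝ}
    (I : Finset (Finset (Fin n))) (c : Finset (Fin n) → Finset (Fin n))
    (hK : ∀ K ∈ I, K.card = k + 1) (hC : ∀ K ∈ I, (c K).card = i) (hCK : ∀ K ∈ I, c K ⊆ K)
    (hI : ∀ K ∈ I, Iso k n t p K (c K)) (hcard : n.choose i < I.card) :
    ¬ CohomConnected (complexAt k n t p) j := by
  rintro ⟨h0, h⟩
  set G := complexAt k n t p with hG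
  have hfin : Module.finrank (ZMod 2) (cocycles G i) ≤ n.choose i := by
    rcases Nat.eq_zero_or_pos i with rfl | hi
    · obtain ⟨e⟩ := h0
      have e' : cohomology G 0 ≃ₗ[ZMod 2] cocycles G 0 := by
        refine Submodule.quotEquivOfEqBot _ ?_
        rw [coboundaries]
        exact Submodule.comap_bot _ |>.trans (LinearMap.ker_eq_bot.mpr Subtype.val_injective)
      have := (e'.symm.trans e).finrank_eq
      rw [this]; simp
    · have hsub := h i hi hij
      obtain ⟨i, rfl⟩ : ∃ i', i = i' + 1 := ⟨i - 1, by omega⟩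
      have htop := Submodule.Quotient.subsingleton_iff.mp hsub
      have hle : cocycles G (i + 1) ≤ LinearMap.range (coboundary G i) := by
        intro f hf
        have hm : (⟨f, hf⟩ : cocycles G (i + 1)) ∈
            (coboundaries G (i + 1)).comap (cocycles G (i + 1)).subtype := by rw [htop]; trivial
        exact hm
      calc Module.finrank (ZMod 2) (cocycles G (i + 1))
          ≤ Module.finrank (ZMod 2) (LinearMap.range (coboundary G i)) :=
            Submodule.finrank_mono hle
        _ ≤ Module.finrank (ZMod 2) (Cochain G i) := LinearMap.finrank_range_le _
        _ = Fintype.card {A : Finset (Fin n) // IsSimplex G i A} :=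
            Module.finrank_fintype_fun_eq_card _
        _ ≤ n.choose (i + 1) := by
            rw [Fintype.card_subtype]
            calc _ ≤ (Finset.powersetCard (i + 1) (Finset.univ : Finset (Fin n))).card := by
                  apply Finset.card_le_card
                  intro A hA
                  rw [Finset.mem_filter] at hA
                  rw [Finset.mem_powersetCard]
                  exact ⟨Finset.subset_univ _, hA.2.2⟩
              _ = _ := by rw [Finset.card_powersetCard]; simp
  -- linear independence
  let v : I → cocycles G i := fun K =>
    ⟨flc G i K.1 (c K.1), flc_cocycle (hK _ K.2) (hC _ K.2) (hCK _ K.2) (hI _ K.2)⟩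
  have hw : ∀ K : I, ∃ w, w ∈ K.1 \ c K.1 := by
    intro K
    have : 0 < (K.1 \ c K.1).card := by
      rw [Finset.card_sdiff_of_subset (hCK _ K.2), hK _ K.2, hC _ K.2]; omega
    exact Finset.card_pos.mp this
  have hli : LinearIndependent (ZMod 2) v := by
    rw [Fintype.linearIndependent_iff]
    intro g hg K
    obtain ⟨w, hw⟩ := hw K
    have hwd := Finset.mem_sdiff.mp hw
    have hP : IsSimplex G i (insert w (c K.1)) := by
      refine ⟨sub_mem (hK _ K.2) (hI _ K.2).1 (Finset.insert_subset hwd.1 (hCK _ K.2))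
        (Finset.insert_nonempty _ _), ?_⟩
      rw [Finset.card_insert_of_notMem hwd.2, hC _ K.2]
    have h1 := congrArg (fun z : cocycles G i => z.1 ⟨_, hP⟩) hg
    simp only [Submodule.coe_sum, Submodule.coe_smul, Finset.sum_apply, Pi.smul_apply,
      Submodule.coe_zero, Pi.zero_apply, smul_eq_mul] at h1
    rw [Finset.sum_eq_single K] at h1
    · have : (v K).1 ⟨_, hP⟩ = 1 := by
        change fl K.1 (c K.1) (insert w (c K.1)) = 1
        rw [fl, if_pos ⟨w, hw, rfl⟩]
      rw [this, mul_one] at h1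
      exact h1
    · intro K' _ hne
      have : (v K').1 ⟨_, hP⟩ = 0 := by
        change fl K'.1 (c K'.1) (insert w (c K.1)) = 0
        rw [fl, if_neg]
        rintro ⟨w', hw', heq⟩
        apply hne
        have hsub : insert w' (c K'.1) ⊆ K.1 := by
          rw [← heq]; exact Finset.insert_subset hwd.1 (hCK _ K.2)
        have := (hI _ K'.2).2 K.1 (hK _ K.2) (hI _ K.2).1
          ((Finset.subset_insert _ _).trans hsub) ⟨w', hw', hsub (Finset.mem_insert_self _ _)⟩
        exact Subtype.ext this.symm
      rw [this, mul_zero]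
    · intro h; exact absurd (Finset.mem_univ _) h
  have := hli.fintype_card_le_finrank
  rw [Fintype.card_coe] at this
  omega

/-- an isolated vertex obstructs connectedness -/
lemma not_conn_of_isolated {k n j : ℕ} (hn : 2 ≤ n)
    {t : Finset (Fin n) → ℝ} {p : ℝ} (v : Fin n)
    (hv : ∀ K : Finset (Fin n), K.card = k + 1 → v ∈ K → p < t K) :
    ¬ CohomConnected (complexAt k n t p) j := by
  rintro ⟨⟨e⟩, -⟩
  set G := complexAt k n t p with hG
  have hsing : ∀ x : Fin n, IsSimplex G 0 {x} := fun x => ⟨Or.inl ⟨x, rfl⟩, by simp⟩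
  have e' : cohomology G 0 ≃ₗ[ZMod 2] cocycles G 0 := by
    refine Submodule.quotEquivOfEqBot _ ?_
    rw [coboundaries]
    exact Submodule.comap_bot _ |>.trans (LinearMap.ker_eq_bot.mpr Subtype.val_injective)
  have E := e'.symm.trans e
  let f1 : Cochain G 0 := fun A => if A.1 = {v} then 1 else 0
  let f2 : Cochain G 0 := fun _ => 1
  have hface : ∀ σ : {A : Finset (Fin n) // IsSimplex G 1 A}, ∀ τ ∈ Finset.powersetCard 1 σ.1,
      IsSimplex G 0 τ := by
    intro σ τ hτ
    obtain ⟨-, hc⟩ := Finset.mem_powersetCard.mp hτ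
    obtain ⟨x, rfl⟩ := Finset.card_eq_one.mp hc
    exact hsing x
  have hf1 : f1 ∈ cocycles G 0 := by
    rw [cocycles, LinearMap.mem_ker]
    funext σ
    change (∑ τ ∈ Finset.powersetCard 1 σ.1, if h : IsSimplex G 0 τ then
      (if τ = {v} then (1 : ZMod 2) else 0) else 0) = 0
    refine Finset.sum_eq_zero fun τ hτ => ?_
    rw [dif_pos (hface σ τ hτ), if_neg]
    rintro rfl
    obtain ⟨K', hK', ht, hs⟩ := mem_complex_of_card σ.2.1 (by rw [σ.2.2])
    have := (Finset.mem_powersetCard.mp hτ).1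
    exact absurd ht (not_le.mpr (hv K' hK' (hs (this (Finset.mem_singleton_self v)))))
  have hf2 : f2 ∈ cocycles G 0 := by
    rw [cocycles, LinearMap.mem_ker]
    funext σ
    change (∑ τ ∈ Finset.powersetCard 1 σ.1, if h : IsSimplex G 0 τ then (1 : ZMod 2) else 0) = 0
    have h1 : ∀ τ ∈ Finset.powersetCard 1 σ.1,
        (if h : IsSimplex G 0 τ then (1 : ZMod 2) else 0) = 1 :=
      fun τ hτ => dif_pos (hface σ τ hτ)
    rw [Finset.sum_congr rfl h1, Finset.sum_const, Finset.card_powersetCard, σ.2.2]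
    rfl
  obtain ⟨u, hu⟩ : ∃ u : Fin n, u ≠ v := by
    have : Nontrivial (Fin n) := Fin.nontrivial_iff_two_le.mpr hn
    exact exists_ne v
  have a1 : f1 ⟨{v}, hsing v⟩ = 1 := by simp [f1]
  have a2 : f1 ⟨{u}, hsing u⟩ = 0 := by simp [f1, hu]
  have h10 : E ⟨f1, hf1⟩ ≠ 0 := by
    intro h
    rw [map_eq_zero_iff _ E.injective] at h
    have : f1 = 0 := congrArg Subtype.val h
    rw [this] at a1; exact zero_ne_one a1
  have h20 : E ⟨f2, hf2⟩ ≠ 0 := by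
    intro h
    rw [map_eq_zero_iff _ E.injective] at h
    have : f2 = 0 := congrArg Subtype.val h
    have a3 : f2 ⟨{v}, hsing v⟩ = 1 := rfl
    rw [this] at a3; exact zero_ne_one a3
  have hz : ∀ x y : ZMod 2, x ≠ 0 → y ≠ 0 → x = y := by
    intro x y hx hy
    have : ∀ z : ZMod 2, z = 0 ∨ z = 1 := fun z => by fin_cases z; exacts [Or.inl rfl, Or.inr rfl]
    rcases this x with h | h
    · exact absurd h hx
    · rcases this y with h' | h'
      · exact absurd h' hy
      · rw [h, h']
  have := E.injective (hz _ _ h10 h20)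
  have : f1 = f2 := congrArg Subtype.val this
  rw [this] at a2
  exact one_ne_zero a2

end RSC

namespace RSC

lemma image_union_card {n : ℕ} (r : ℕ) (U C : Finset (Fin n)) (h : Disjoint U C) :
    ((Finset.powersetCard r U).image (fun A => A ∪ C)).card = U.card.choose r := by
  rw [Finset.card_image_of_injOn, Finset.card_powersetCard]
  intro A hA B hB hAB
  rw [Finset.mem_coe, Finset.mem_powersetCard] at hA hB
  have hAC : Disjoint A C := h.mono_left hA.1
  have hBC : Disjoint B C := h.mono_left hB.1
  have hAB' : A ∪ C = B ∪ C := hAB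
  calc A = (A ∪ C) \ C := (Finset.union_sdiff_cancel_right hAC).symm
    _ = (B ∪ C) \ C := by rw [hAB']
    _ = B := Finset.union_sdiff_cancel_right hBC

/-- the `(k+1)`-sets other than `K` that contain a petal of the flower -/
noncomputable def nb (k : ℕ) {n : ℕ} (K C : Finset (Fin n)) : Finset (Finset (Fin n)) :=
  (Finset.powersetCard (k + 1) Finset.univ).filter
    (fun K' => K' ≠ K ∧ C ⊆ K' ∧ ∃ w ∈ K \ C, w ∈ K')

/-- the cardinality of `nb` -/
def dd (n k i : ℕ) : ℕ := (n - i).choose (k + 1 - i) - (n - (k + 1)).choose (k + 1 - i) - 1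

lemma mem_image_union {n r : ℕ} (U C K' : Finset (Fin n)) (hUC : Disjoint U C) :
    K' ∈ (Finset.powersetCard r U).image (fun A => A ∪ C) ↔
      C ⊆ K' ∧ K'.card = C.card + r ∧ K' \ C ⊆ U := by
  simp only [Finset.mem_image, Finset.mem_powersetCard]
  constructor
  · rintro ⟨A, ⟨hA, hc⟩, rfl⟩
    have hAC : Disjoint A C := hUC.mono_left hA
    refine ⟨Finset.subset_union_right, ?_, ?_⟩
    · rw [Finset.card_union_of_disjoint hAC, hc]; omega
    · rw [Finset.union_sdiff_cancel_right hAC]; exact hA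
  · rintro ⟨h1, h2, h3⟩
    refine ⟨K' \ C, ⟨h3, ?_⟩, Finset.sdiff_union_of_subset h1⟩
    rw [Finset.card_sdiff_of_subset h1]; omega

lemma nb_card {n k i : ℕ} {K C : Finset (Fin n)} (hK : K.card = k + 1) (hCK : C ⊆ K)
    (hC : C.card = i) (hik : i ≤ k) : (nb k K C).card = dd n k i := by
  set A1 := (Finset.powersetCard (k + 1 - i) (Finset.univ \ C)).image (fun A => A ∪ C) with hA1
  set A2 := (Finset.powersetCard (k + 1 - i) (Finset.univ \ K)).image (fun A => A ∪ C) with hA2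
  have d1 : Disjoint (Finset.univ \ C) C := Finset.sdiff_disjoint
  have d2 : Disjoint (Finset.univ \ K) C :=
    Finset.disjoint_of_subset_right hCK Finset.sdiff_disjoint
  have hi : C.card + (k + 1 - i) = k + 1 := by omega
  have hsub : A2 ⊆ A1 := by
    apply Finset.image_subset_image
    apply Finset.powersetCard_mono
    exact Finset.sdiff_subset_sdiff le_rfl hCK
  have hKA : K ∈ A1 \ A2 := by
    rw [Finset.mem_sdiff, hA1, hA2, mem_image_union _ _ _ d1, mem_image_union _ _ _ d2]
    refine ⟨⟨hCK, by omega, Finset.sdiff_subset_sdiff (Finset.subset_univ _) le_rfl⟩, ?_⟩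
    rintro ⟨-, -, h⟩
    have : (K \ C).card = k + 1 - i := by rw [Finset.card_sdiff_of_subset hCK]; omega
    obtain ⟨w, hw⟩ := Finset.card_pos.mp (show 0 < (K \ C).card by omega)
    have := h hw
    simp only [Finset.mem_sdiff] at this hw
    exact this.2 hw.1
  have hnb : nb k K C = (A1 \ A2).erase K := by
    ext K'
    rw [Finset.mem_erase, Finset.mem_sdiff, hA1, hA2, mem_image_union _ _ _ d1,
      mem_image_union _ _ _ d2, nb, Finset.mem_filter, Finset.mem_powersetCard, hi]
    constructor
    · rintro ⟨⟨-, h1⟩, h2, h3, w, hw, hw'⟩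
      refine ⟨h2, ⟨h3, h1, Finset.sdiff_subset_sdiff (Finset.subset_univ _) le_rfl⟩, ?_⟩
      rintro ⟨-, -, h⟩
      rw [Finset.mem_sdiff] at hw
      have := h (Finset.mem_sdiff.mpr ⟨hw', hw.2⟩)
      exact (Finset.mem_sdiff.mp this).2 hw.1
    · rintro ⟨h2, ⟨h3, h1, -⟩, h⟩
      refine ⟨⟨Finset.subset_univ _, h1⟩, h2, h3, ?_⟩
      by_contra hcon
      push Not at hcon
      apply h
      refine ⟨h3, h1, fun x hx => ?_⟩
      rw [Finset.mem_sdiff] at hx ⊢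
      refine ⟨Finset.mem_univ _, fun hxK => ?_⟩
      exact hcon x (Finset.mem_sdiff.mpr ⟨hxK, hx.2⟩) hx.1
  rw [hnb, Finset.card_erase_of_mem hKA, Finset.card_sdiff_of_subset hsub, hA1, hA2,
    image_union_card _ _ _ d1, image_union_card _ _ _ d2, dd,
    Finset.card_sdiff_of_subset (Finset.subset_univ _),
    Finset.card_sdiff_of_subset (Finset.subset_univ _), hK, hC]
  simp

lemma supersets_card {n : ℕ} (k e : ℕ) (D : Finset (Fin n)) (he : e ≤ D.card) (hek : e ≤ k + 1) :
    ((Finset.powersetCard (k + 1) Finset.univ).filter (fun K' : Finset (Fin n) => D ⊆ K')).card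
      ≤ n ^ (k + 1 - e) := by
  obtain ⟨D', hD', hc⟩ := Finset.exists_subset_card_eq he
  have d1 : Disjoint (Finset.univ \ D') D' := Finset.sdiff_disjoint
  calc _ ≤ ((Finset.powersetCard (k + 1 - e) (Finset.univ \ D')).image (fun A => A ∪ D')).card := by
        apply Finset.card_le_card
        intro K' hK'
        rw [Finset.mem_filter, Finset.mem_powersetCard] at hK'
        rw [mem_image_union _ _ _ d1]
        exact ⟨hD'.trans hK'.2, by omega,
          Finset.sdiff_subset_sdiff (Finset.subset_univ _) le_rfl⟩
    _ = ((Finset.univ \ D').card).choose (k + 1 - e) := image_union_card _ _ _ d1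
    _ ≤ n.choose (k + 1 - e) := by
        apply Nat.choose_le_choose
        exact (Finset.card_le_univ _).trans (by simp)
    _ ≤ n ^ (k + 1 - e) := Nat.choose_le_pow _ _

lemma overlap_card {n k i : ℕ} (hik : i < k) {K1 K2 C1 C2 : Finset (Fin n)}
    (hK1 : K1.card = k + 1) (hK2 : K2.card = k + 1) (hC2K : C2 ⊆ K2)
    (hC1 : C1.card = i) (hC2 : C2.card = i)
    (hne : K2 ≠ K1) (hnb : K2 ∉ nb k K1 C1) :
    (nb k K1 C1 ∩ nb k K2 C2).card ≤ (k + 1) ^ 2 * n ^ (k - i - 1) := by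
  have hsub : nb k K1 C1 ∩ nb k K2 C2 ⊆ ((K1 \ C1) ×ˢ (K2 \ C2)).biUnion (fun w =>
      (Finset.powersetCard (k + 1) Finset.univ).filter
        (fun K' => insert w.1 C1 ∪ insert w.2 C2 ⊆ K')) := by
    intro K' hK'
    rw [Finset.mem_inter, nb, nb, Finset.mem_filter, Finset.mem_filter] at hK'
    obtain ⟨⟨h1, h2, h3, w, hw, hw'⟩, -, h4, h5, w2, hw2, hw2'⟩ := hK'
    rw [Finset.mem_biUnion]
    refine ⟨(w, w2), Finset.mem_product.mpr ⟨hw, hw2⟩, ?_⟩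
    rw [Finset.mem_filter]
    exact ⟨h1, Finset.union_subset (Finset.insert_subset hw' h3) (Finset.insert_subset hw2' h5)⟩
  calc _ ≤ _ := Finset.card_le_card hsub
    _ ≤ ((K1 \ C1) ×ˢ (K2 \ C2)).card * n ^ (k - i - 1) := by
        apply Finset.card_biUnion_le_card_mul
        rintro ⟨w, w2⟩ hw
        rw [Finset.mem_product, Finset.mem_sdiff, Finset.mem_sdiff] at hw
        obtain ⟨⟨hw1, hw2⟩, hw3, hw4⟩ := hw
        dsimp only at hw1 hw2 hw3 hw4
        have := supersets_card k (i + 2) (insert w C1 ∪ insert w2 C2) ?_ (by omega)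
        · have e : k + 1 - (i + 2) = k - i - 1 := by omega
          rwa [e] at this
        · by_contra hlt
          push Not at hlt
          have c1 : (insert w C1).card = i + 1 := by rw [Finset.card_insert_of_notMem hw2, hC1]
          have c2 : (insert w2 C2).card = i + 1 := by rw [Finset.card_insert_of_notMem hw4, hC2]
          have e1 : insert w C1 = insert w C1 ∪ insert w2 C2 :=
            Finset.eq_of_subset_of_card_le Finset.subset_union_left (by omega)
          have e2 : insert w2 C2 = insert w C1 ∪ insert w2 C2 :=
            Finset.eq_of_subset_of_card_le Finset.subset_union_right (by omega)
          have hs : insert w C1 ⊆ K2 := by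
            rw [e1, ← e2]; exact Finset.insert_subset hw3 hC2K
          apply hnb
          rw [nb, Finset.mem_filter, Finset.mem_powersetCard]
          exact ⟨⟨Finset.subset_univ _, hK2⟩, hne, (Finset.subset_insert _ _).trans hs,
            w, Finset.mem_sdiff.mpr ⟨hw1, hw2⟩, hs (Finset.mem_insert_self _ _)⟩
    _ ≤ (k + 1) ^ 2 * n ^ (k - i - 1) := by
        apply Nat.mul_le_mul_right
        rw [Finset.card_product, sq]
        exact Nat.mul_le_mul ((Finset.card_le_card Finset.sdiff_subset).trans hK1.le)
          ((Finset.card_le_card Finset.sdiff_subset).trans hK2.le)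

lemma self_notMem_nb {n k : ℕ} (K C : Finset (Fin n)) : K ∉ nb k K C := by
  simp [nb]

/-- the event that `K` is born by time `a` and its flower is isolated until time `b` -/
def EvI (k n : ℕ) (a b : ℝ) (K C : Finset (Fin n)) : Set (Finset (Fin n) → ℝ) :=
  {t | (∀ K' ∈ ({K} : Finset (Finset (Fin n))), t K' ≤ a) ∧ ∀ K' ∈ nb k K C, b < t K'}

lemma iso_of_EvI {k n : ℕ} {a b p : ℝ} {K C : Finset (Fin n)} {t : Finset (Fin n) → ℝ}
    (h : t ∈ EvI k n a b K C) (hap : a ≤ p) (hpb : p ≤ b) : Iso k n t p K C := by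
  refine ⟨(h.1 K (Finset.mem_singleton_self _)).trans hap, fun K' hK' ht hC hw => ?_⟩
  by_contra hne
  have := h.2 K' (by
    rw [nb, Finset.mem_filter, Finset.mem_powersetCard]
    exact ⟨⟨Finset.subset_univ _, hK'⟩, hne, hC, hw⟩)
  linarith

lemma cheb {k n i : ℕ} (hik : i < k) (hn : k + 1 ≤ n) (c : Finset (Fin n) → Finset (Fin n))
    (hcs : ∀ K, K.card = k + 1 → c K ⊆ K) (hcc : ∀ K, K.card = k + 1 → (c K).card = i)
    (a b : ℝ) (ha : 0 < a) (hab : a ≤ b) (hb : b < 1) :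
    (birthMeasure n).real {t | (((Finset.powersetCard (k + 1) Finset.univ).filter
        (fun K => t ∈ EvI k n a b K (c K))).card : ℝ) ≤
          (n.choose (k + 1) : ℝ) * (a * (1 - b) ^ dd n k i) / 2}
      ≤ 4 * (1 / ((n.choose (k + 1) : ℝ) * (a * (1 - b) ^ dd n k i)) +
        (((1 - b) ^ ((k + 1) ^ 2 * n ^ (k - i - 1)))⁻¹ - 1)) := by
  have hb1 : 0 < 1 - b := by linarith
  have hcard : (Finset.powersetCard (k + 1) (Finset.univ : Finset (Fin n))).card
      = n.choose (k + 1) := by rw [Finset.card_powersetCard]; simp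
  have hmem : ∀ K ∈ Finset.powersetCard (k + 1) (Finset.univ : Finset (Fin n)),
      K.card = k + 1 := fun K hK => (Finset.mem_powersetCard.mp hK).2
  set M := (k + 1) ^ 2 * n ^ (k - i - 1) with hM
  have hpw : 0 < (1 - b) ^ M := by positivity
  have hpw1 : (1 - b) ^ M ≤ 1 := pow_le_one₀ hb1.le (by linarith)
  have := second_moment (birthMeasure n) (Finset.powersetCard (k + 1) Finset.univ)
    (fun K => EvI k n a b K (c K)) (fun K => measurable_box _ _ _ _ _)
    (a * (1 - b) ^ dd n k i) (((1 - b) ^ M)⁻¹ - 1) (by positivity) ?_ ?_ ?_ ?_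
  · rw [hcard] at this
    exact this
  · intro K hK
    have hd : Disjoint ({K} : Finset (Finset (Fin n))) (nb k K (c K)) := by
      rw [Finset.disjoint_singleton_left]; exact self_notMem_nb _ _
    rw [EvI, prob_box n _ _ hd a b ha.le (by linarith) (by linarith) hb.le,
      nb_card (hmem K hK) (hcs K (hmem K hK)) (hcc K (hmem K hK)) hik.le]
    simp
  · have := (one_le_inv₀ hpw).mpr hpw1
    linarith
  · intro K1 hK1 K2 hK2 hne
    have h0 : 0 ≤ (1 + (((1 - b) ^ M)⁻¹ - 1)) * (a * (1 - b) ^ dd n k i) ^ 2 := by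
      have : 0 < ((1 - b) ^ M)⁻¹ := by positivity
      have h' : 1 + (((1 - b) ^ M)⁻¹ - 1) = ((1 - b) ^ M)⁻¹ := by ring
      rw [h']; positivity
    have hk1 := hmem K1 hK1
    have hk2 := hmem K2 hK2
    by_cases h12 : K2 ∈ nb k K1 (c K1)
    · have : EvI k n a b K1 (c K1) ∩ EvI k n a b K2 (c K2) = ∅ := by
        ext t
        simp only [Set.mem_inter_iff, Set.mem_empty_iff_false, iff_false]
        rintro ⟨h1, h2⟩
        have := h1.2 K2 h12
        have := h2.1 K2 (Finset.mem_singleton_self _)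
        linarith
      rw [this]; simpa using h0
    by_cases h21 : K1 ∈ nb k K2 (c K2)
    · have : EvI k n a b K1 (c K1) ∩ EvI k n a b K2 (c K2) = ∅ := by
        ext t
        simp only [Set.mem_inter_iff, Set.mem_empty_iff_false, iff_false]
        rintro ⟨h1, h2⟩
        have := h2.2 K1 h21
        have := h1.1 K1 (Finset.mem_singleton_self _)
        linarith
      rw [this]; simpa using h0
    have hset : EvI k n a b K1 (c K1) ∩ EvI k n a b K2 (c K2) =
        {t | (∀ K' ∈ ({K1, K2} : Finset (Finset (Fin n))), t K' ≤ a) ∧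
          ∀ K' ∈ nb k K1 (c K1) ∪ nb k K2 (c K2), b < t K'} := by
      ext t
      simp only [EvI, Set.mem_inter_iff, Set.mem_ofPred_eq, Finset.mem_singleton,
        Finset.mem_insert, Finset.mem_union]
      constructor
      · rintro ⟨⟨h1, h2⟩, h3, h4⟩
        refine ⟨?_, ?_⟩
        · rintro K' (h | h)
          · exact h1 K' h
          · exact h3 K' h
        · rintro K' (h | h)
          · exact h2 K' h
          · exact h4 K' h
      · rintro ⟨h1, h2⟩
        exact ⟨⟨fun K' h => h1 K' (Or.inl h), fun K' h => h2 K' (Or.inl h)⟩,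
          fun K' h => h1 K' (Or.inr h), fun K' h => h2 K' (Or.inr h)⟩
    have hd : Disjoint ({K1, K2} : Finset (Finset (Fin n)))
        (nb k K1 (c K1) ∪ nb k K2 (c K2)) := by
      rw [Finset.disjoint_left]
      intro K' hK' hK''
      rw [Finset.mem_insert, Finset.mem_singleton] at hK'
      rw [Finset.mem_union] at hK''
      rcases hK' with rfl | rfl
      · rcases hK'' with h | h
        · exact self_notMem_nb _ _ h
        · exact h21 h
      · rcases hK'' with h | h
        · exact h12 h
        · exact self_notMem_nb _ _ h
    rw [hset, prob_box n _ _ hd a b ha.le (by linarith) (by linarith) hb.le]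
    rw [Finset.card_pair hne]
    have hov := overlap_card hik hk1 hk2 (hcs K2 hk2) (hcc K1 hk1) (hcc K2 hk2) hne.symm h12
    have hui := Finset.card_union_add_card_inter (nb k K1 (c K1)) (nb k K2 (c K2))
    rw [nb_card hk1 (hcs K1 hk1) (hcc K1 hk1) hik.le,
      nb_card hk2 (hcs K2 hk2) (hcc K2 hk2) hik.le] at hui
    have hle : dd n k i + dd n k i ≤ (nb k K1 (c K1) ∪ nb k K2 (c K2)).card + M := by omega
    have hp : (1 - b) ^ ((nb k K1 (c K1) ∪ nb k K2 (c K2)).card + M)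
        ≤ (1 - b) ^ (dd n k i + dd n k i) :=
      pow_le_pow_of_le_one hb1.le (by linarith) hle
    rw [pow_add, pow_add] at hp
    have h' : 1 + (((1 - b) ^ M)⁻¹ - 1) = ((1 - b) ^ M)⁻¹ := by ring
    rw [h', inv_mul_eq_div, le_div_iff₀ hpw]
    nlinarith [sq_nonneg a]
  · rw [hcard]; exact Nat.choose_pos hn

end RSC

namespace RSC

lemma measurable_first {n : ℕ} (S : Finset (Finset (Fin n))) (T : ℝ) (K : Finset (Fin n)) :
    MeasurableSet {t : Finset (Fin n) → ℝ | T < t K ∧ ∀ K' ∈ S, K' ≠ K → t K < t K'} := by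
  apply MeasurableSet.inter
  · exact measurableSet_lt measurable_const (measurable_pi_apply K)
  · have : {t : Finset (Fin n) → ℝ | ∀ K' ∈ S, K' ≠ K → t K < t K'} =
        ⋂ K' ∈ S, {t | K' ≠ K → t K < t K'} := by ext; simp
    change MeasurableSet {t : Finset (Fin n) → ℝ | ∀ K' ∈ S, K' ≠ K → t K < t K'}
    rw [this]
    refine Finset.measurableSet_biInter _ fun K' _ => ?_
    by_cases h : K' = K
    · simp [h]
    · simp only [ne_eq, h, not_false_eq_true, forall_true_left]
      exact measurableSet_lt (measurable_pi_apply K) (measurable_pi_apply K')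

lemma first_symm {n : ℕ} (S : Finset (Finset (Fin n))) (T : ℝ) (K K0 : Finset (Fin n))
    (hK : K ∈ S) (hK0 : K0 ∈ S) :
    (birthMeasure n).real {t | T < t K ∧ ∀ K' ∈ S, K' ≠ K → t K < t K'} =
      (birthMeasure n).real {t | T < t K0 ∧ ∀ K' ∈ S, K' ≠ K0 → t K0 < t K'} := by
  let σ : Equiv.Perm (Finset (Fin n)) := Equiv.swap K K0
  have hmp : MeasurePreserving (MeasurableEquiv.piCongrLeft (fun _ => ℝ) σ)
      (birthMeasure n) (birthMeasure n) :=
    measurePreserving_piCongrLeft (fun _ : Finset (Fin n) => volume.restrict (Set.Icc (0:ℝ) 1)) σ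
  have hval : ∀ (t : Finset (Fin n) → ℝ) (x : Finset (Fin n)),
      (MeasurableEquiv.piCongrLeft (fun _ => ℝ) σ) t x = t (σ x) := by
    intro t x
    have h1 : σ (σ x) = x := by simp [σ]
    have := Equiv.piCongrLeft_apply_apply (fun _ : Finset (Fin n) => ℝ) σ t (σ x)
    rw [h1] at this
    exact this
  have := hmp.measureReal_preimage (measurable_first S T K).nullMeasurableSet
  rw [← this]
  congr 1
  have hσS : ∀ x ∈ S, σ x ∈ S := by
    intro x hx
    by_cases h1 : x = K
    · subst h1; simp only [σ, Equiv.swap_apply_left]; exact hK0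
    by_cases h2 : x = K0
    · subst h2; simp only [σ, Equiv.swap_apply_right]; exact hK
    · simp only [σ, Equiv.swap_apply_of_ne_of_ne h1 h2]; exact hx
  have hσσ : ∀ x, σ (σ x) = x := by intro x; simp [σ]
  have hσK : σ K = K0 := Equiv.swap_apply_left _ _
  have hσK0 : σ K0 = K := Equiv.swap_apply_right _ _
  ext t
  simp only [Set.mem_preimage, Set.mem_ofPred_eq, hval, hσK]
  refine and_congr_right fun _ => ⟨fun h K' hK' hne => ?_, fun h K' hK' hne => ?_⟩
  · have := h (σ K') (hσS _ hK') (fun he => hne (by rw [← hσσ K', he, hσK]))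
    rwa [hσσ] at this
  · exact h (σ K') (hσS _ hK') (fun he => hne (by rw [← hσσ K', he, hσK0]))

lemma first_prob {n : ℕ} (S : Finset (Finset (Fin n))) (T : ℝ) (hT0 : 0 ≤ T) (hT1 : T ≤ 1)
    (K : Finset (Fin n)) (hK : K ∈ S) :
    (birthMeasure n).real {t | T < t K ∧ ∀ K' ∈ S, K' ≠ K → t K < t K'} ≤
      (1 - T) ^ S.card / S.card := by
  have hpos : (0:ℝ) < S.card := by exact_mod_cast Finset.card_pos.mpr ⟨K, hK⟩
  rw [le_div_iff₀ hpos]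
  have h1 : ∑ K1 ∈ S, (birthMeasure n).real
      {t | T < t K1 ∧ ∀ K' ∈ S, K' ≠ K1 → t K1 < t K'} =
      (birthMeasure n).real {t | T < t K ∧ ∀ K' ∈ S, K' ≠ K → t K < t K'} * S.card := by
    rw [Finset.sum_congr rfl (fun K1 h => first_symm S T K1 K h hK), Finset.sum_const,
      nsmul_eq_mul, mul_comm]
  rw [← h1, ← measureReal_biUnion_finset]
  · have h2 := prob_box n ∅ S (Finset.disjoint_empty_left _) 0 T le_rfl zero_le_one hT0 hT1
    rw [Finset.card_empty, pow_zero, one_mul] at h2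
    rw [← h2]
    apply measureReal_mono
    · intro t ht
      simp only [Set.mem_iUnion] at ht
      obtain ⟨K1, hK1, h3, h4⟩ := ht
      refine ⟨by simp, fun K' hK' => ?_⟩
      by_cases h : K' = K1
      · rw [h]; exact h3
      · exact h3.trans (h4 K' hK' h)
    · exact measure_ne_top _ _
  · intro K1 hK1 K2 hK2 hne
    rw [Function.onFun, Set.disjoint_left]
    rintro t ⟨_, h⟩ ⟨_, h'⟩
    exact lt_asymm (h K2 hK2 hne.symm) (h' K1 hK1 hne)
  · intro K1 _; exact measurable_first S T K1

lemma insert_self_nb_card {n k i : ℕ} {K C : Finset (Fin n)} (hK : K.card = k + 1) (hCK : C ⊆ K)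
    (hC : C.card = i) (hik : i ≤ k) : (insert K (nb k K C)).card = dd n k i + 1 := by
  rw [Finset.card_insert_of_notMem (self_notMem_nb _ _), nb_card hK hCK hC hik]

/-- union bound over pairs (K, C) -/
lemma pair_union {n : ℕ} (k j : ℕ) (A : Finset (Fin n) → Finset (Fin n) →
      Set (Finset (Fin n) → ℝ)) (x : ℝ) (hx : 0 ≤ x)
    (h : ∀ K C : Finset (Fin n), K.card = k + 1 → C ⊆ K → C.card = j →
      (birthMeasure n).real (A K C) ≤ x) :
    (birthMeasure n).real {t | ∃ K C : Finset (Fin n), K.card = k + 1 ∧ C ⊆ K ∧ C.card = j ∧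
      t ∈ A K C} ≤ (n:ℝ) ^ (k + 1) * 2 ^ (k + 1) * x := by
  have hsub : {t | ∃ K C : Finset (Fin n), K.card = k + 1 ∧ C ⊆ K ∧ C.card = j ∧
      t ∈ A K C} ⊆ ⋃ K ∈ Finset.powersetCard (k + 1) (Finset.univ : Finset (Fin n)),
        ⋃ C ∈ Finset.powersetCard j K, A K C := by
    rintro t ⟨K, C, hK, hCK, hC, ht⟩
    simp only [Set.mem_iUnion]
    exact ⟨K, Finset.mem_powersetCard.mpr ⟨Finset.subset_univ _, hK⟩, C,
      Finset.mem_powersetCard.mpr ⟨hCK, hC⟩, ht⟩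
  refine (measureReal_mono hsub (measure_ne_top _ _)).trans ?_
  refine (measureReal_biUnion_finset_le _ _).trans ?_
  have h1 : ∀ K ∈ Finset.powersetCard (k + 1) (Finset.univ : Finset (Fin n)),
      (birthMeasure n).real (⋃ C ∈ Finset.powersetCard j K, A K C) ≤ 2 ^ (k + 1) * x := by
    intro K hK
    have hKc := (Finset.mem_powersetCard.mp hK).2
    refine (measureReal_biUnion_finset_le _ _).trans ?_
    refine (Finset.sum_le_sum fun C hC => h K C hKc (Finset.mem_powersetCard.mp hC).1
      (Finset.mem_powersetCard.mp hC).2).trans ?_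
    rw [Finset.sum_const, nsmul_eq_mul, Finset.card_powersetCard, hKc]
    refine mul_le_mul_of_nonneg_right ?_ hx
    exact_mod_cast Nat.choose_le_two_pow _ _
  refine (Finset.sum_le_sum h1).trans ?_
  rw [Finset.sum_const, nsmul_eq_mul, Finset.card_powersetCard, mul_assoc]
  refine mul_le_mul_of_nonneg_right ?_ (by positivity)
  rw [Finset.card_univ, Fintype.card_fin]
  exact_mod_cast Nat.choose_le_pow _ _

/-- late births of isolated flowers are unlikely -/
lemma bad5 {n : ℕ} (k j : ℕ) (hjk : j < k) (T : ℝ) (hT0 : 0 ≤ T) (hT1 : T ≤ 1) :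
    (birthMeasure n).real {t | ∃ K C : Finset (Fin n), K.card = k + 1 ∧ C ⊆ K ∧ C.card = j ∧
      t ∈ {t : Finset (Fin n) → ℝ | T < t K ∧ ∀ K' ∈ nb k K C, t K < t K'}} ≤
      (n:ℝ) ^ (k + 1) * 2 ^ (k + 1) * ((1 - T) ^ (dd n k j + 1) / ((dd n k j + 1 : ℕ) : ℝ)) := by
  refine pair_union k j
    (fun K C => {t : Finset (Fin n) → ℝ | T < t K ∧ ∀ K' ∈ nb k K C, t K < t K'}) _ ?_ ?_
  · have : 0 ≤ 1 - T := by linarith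
    positivity
  · intro K C hK hCK hC
    have := first_prob (insert K (nb k K C)) T hT0 hT1 K (Finset.mem_insert_self _ _)
    rw [insert_self_nb_card hK hCK hC hjk.le] at this
    refine le_trans (measureReal_mono ?_ (measure_ne_top _ _)) this
    rintro t ⟨h1, h2⟩
    refine ⟨h1, fun K' hK' hne => h2 K' ?_⟩
    exact (Finset.mem_insert.mp hK').resolve_left hne

lemma bad1 {n : ℕ} (k : ℕ) (v : Fin n) (s : ℝ) (hs0 : 0 ≤ s) (hs1 : s ≤ 1) :
    (birthMeasure n).real {t | ∃ K : Finset (Fin n), K.card = k + 1 ∧ v ∈ K ∧ t K ≤ s} ≤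
      (n:ℝ) ^ k * s := by
  set F := (Finset.powersetCard (k + 1) Finset.univ).filter
    (fun K' : Finset (Fin n) => {v} ⊆ K') with hF
  have hsub : {t : Finset (Fin n) → ℝ | ∃ K : Finset (Fin n), K.card = k + 1 ∧ v ∈ K ∧ t K ≤ s} ⊆
      ⋃ K ∈ F, {t | (∀ K' ∈ ({K} : Finset (Finset (Fin n))), t K' ≤ s) ∧
        ∀ K' ∈ (∅ : Finset (Finset (Fin n))), (0:ℝ) < t K'} := by
    rintro t ⟨K, hK, hv, ht⟩
    simp only [Set.mem_iUnion]
    refine ⟨K, ?_, ?_⟩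
    · rw [hF, Finset.mem_filter, Finset.mem_powersetCard]
      exact ⟨⟨Finset.subset_univ _, hK⟩, Finset.singleton_subset_iff.mpr hv⟩
    · simpa using ht
  refine (measureReal_mono hsub (measure_ne_top _ _)).trans ?_
  refine (measureReal_biUnion_finset_le _ _).trans ?_
  have : ∀ K ∈ F, (birthMeasure n).real {t | (∀ K' ∈ ({K} : Finset (Finset (Fin n))), t K' ≤ s) ∧
        ∀ K' ∈ (∅ : Finset (Finset (Fin n))), (0:ℝ) < t K'} = s := by
    intro K _
    rw [prob_box n _ _ (Finset.disjoint_empty_right _) s 0 hs0 hs1 le_rfl zero_le_one]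
    simp
  rw [Finset.sum_congr rfl this, Finset.sum_const, nsmul_eq_mul]
  refine mul_le_mul_of_nonneg_right ?_ hs0
  have := supersets_card k 1 ({v} : Finset (Fin n)) (by simp) (by omega)
  exact_mod_cast this

lemma shell_prob {n : ℕ} (m k j : ℕ) (s : ℝ) (hs0 : 0 ≤ s) (hs1 : s ≤ 1)
    (K P V1 V2 : Finset (Fin n)) (hPK : P ⊆ K) (hP : P.card = j + 1)
    (h1 : Disjoint V1 K) (h2 : Disjoint V2 K) (h12 : Disjoint V1 V2)
    (hV1 : V1.card = m) (hV2 : V2.card = m) :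
    (birthMeasure n).real {t | ∀ a ∈ V1, ∃ x ∈ P, ∀ R ∈ Finset.powersetCard (k - j) V2,
      s < t (insert a (P.erase x) ∪ R)} ≤
      (((j + 1 : ℕ) : ℝ) * (1 - s) ^ (m.choose (k - j))) ^ m := by
  let Sφ : (V1 → Fin n) → Finset (Finset (Fin n)) := fun φ =>
    ((Finset.univ : Finset V1) ×ˢ Finset.powersetCard (k - j) V2).image
      (fun z => insert z.1.1 (P.erase (φ z.1)) ∪ z.2)
  have hcardS : ∀ φ ∈ Fintype.piFinset (fun _ : V1 => P),
      (Sφ φ).card = m * m.choose (k - j) := by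
    intro φ hφ
    rw [Finset.card_image_of_injOn, Finset.card_product, Finset.card_powersetCard, hV2,
      Finset.card_univ, Fintype.card_coe, hV1]
    have hI1 : ∀ (a : V1) (R : Finset (Fin n)), R ⊆ V2 →
        (insert a.1 (P.erase (φ a)) ∪ R) ∩ V1 = {a.1} := by
      intro a R hR
      ext y
      simp only [Finset.mem_inter, Finset.mem_union, Finset.mem_insert, Finset.mem_erase,
        Finset.mem_singleton]
      constructor
      · rintro ⟨(h | h) | h, hy⟩
        · exact h
        · exact absurd (hPK h.2) (Finset.disjoint_left.mp h1 hy)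
        · exact absurd (hR h) (Finset.disjoint_left.mp h12 hy)
      · rintro rfl
        exact ⟨Or.inl (Or.inl rfl), a.2⟩
    have hI2 : ∀ (a : V1) (R : Finset (Fin n)), R ⊆ V2 →
        (insert a.1 (P.erase (φ a)) ∪ R) ∩ V2 = R := by
      intro a R hR
      ext y
      simp only [Finset.mem_inter, Finset.mem_union, Finset.mem_insert, Finset.mem_erase]
      constructor
      · rintro ⟨(h | h) | h, hy⟩
        · subst h; exact absurd hy (Finset.disjoint_left.mp h12 a.2)
        · exact absurd (hPK h.2) (Finset.disjoint_left.mp h2 hy)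
        · exact h
      · intro h
        exact ⟨Or.inr h, hR h⟩
    rintro ⟨a, R⟩ hz ⟨a', R'⟩ hz' heq
    simp only [Finset.coe_product, Set.mem_prod, Finset.mem_coe, Finset.mem_powersetCard] at hz hz'
    have heq' : insert a.1 (P.erase (φ a)) ∪ R = insert a'.1 (P.erase (φ a')) ∪ R' := heq
    have e1 := hI1 a R hz.2.1
    rw [heq', hI1 a' R' hz'.2.1] at e1
    have e2 := hI2 a R hz.2.1
    rw [heq', hI2 a' R' hz'.2.1] at e2
    have e3 : a = a' := Subtype.ext (Finset.singleton_injective e1).symm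
    rw [e3, ← e2]
  have hsub : {t : Finset (Fin n) → ℝ | ∀ a ∈ V1, ∃ x ∈ P,
      ∀ R ∈ Finset.powersetCard (k - j) V2, s < t (insert a (P.erase x) ∪ R)} ⊆
      ⋃ φ ∈ Fintype.piFinset (fun _ : V1 => P),
        {t | (∀ K' ∈ (∅ : Finset (Finset (Fin n))), t K' ≤ 0) ∧ ∀ K' ∈ Sφ φ, s < t K'} := by
    intro t ht
    have ht' : ∀ a : V1, ∃ x ∈ P,
      ∀ R ∈ Finset.powersetCard (k - j) V2, s < t (insert a.1 (P.erase x) ∪ R) :=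
      fun a => ht a.1 a.2
    choose φ hφ hφ' using ht'
    simp only [Set.mem_iUnion]
    refine ⟨φ, Fintype.mem_piFinset.mpr hφ, by simp, fun K' hK' => ?_⟩
    obtain ⟨⟨a, R⟩, hz, rfl⟩ := Finset.mem_image.mp hK'
    exact hφ' a R (Finset.mem_product.mp hz).2
  refine (measureReal_mono hsub (measure_ne_top _ _)).trans ?_
  refine (measureReal_biUnion_finset_le _ _).trans ?_
  have hpr : ∀ φ ∈ Fintype.piFinset (fun _ : V1 => P), (birthMeasure n).real
      {t | (∀ K' ∈ (∅ : Finset (Finset (Fin n))), t K' ≤ 0) ∧ ∀ K' ∈ Sφ φ, s < t K'} =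
      (1 - s) ^ (m * m.choose (k - j)) := by
    intro φ hφ
    rw [prob_box n _ _ (Finset.disjoint_empty_left _) 0 s le_rfl zero_le_one hs0 hs1,
      hcardS φ hφ]
    simp
  rw [Finset.sum_congr rfl hpr, Finset.sum_const, nsmul_eq_mul, Fintype.card_piFinset]
  simp only [hP, Finset.prod_const, Finset.card_univ, Fintype.card_coe, hV1]
  rw [mul_pow, ← pow_mul, mul_comm m]
  push_cast
  exact le_rfl

/-- absence of shells is unlikely -/
lemma bad4 {n : ℕ} (m k j : ℕ) (hjk : j < k) (s : ℝ) (hs0 : 0 ≤ s) (hs1 : s ≤ 1)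
    (hm : k + 1 + 2 * m ≤ n) :
    (birthMeasure n).real {t | ∃ K P : Finset (Fin n), K.card = k + 1 ∧ P ⊆ K ∧ P.card = j + 1 ∧
      t ∈ {t : Finset (Fin n) → ℝ | ∀ a, a ∉ K → ∃ x ∈ P, ∀ K' : Finset (Fin n),
        K'.card = k + 1 → insert a (P.erase x) ⊆ K' → s < t K'}} ≤
      (n:ℝ) ^ (k + 1) * 2 ^ (k + 1) * (((j + 1 : ℕ) : ℝ) * (1 - s) ^ (m.choose (k - j))) ^ m := by
  refine pair_union k (j + 1)
    (fun K P => {t : Finset (Fin n) → ℝ | ∀ a, a ∉ K → ∃ x ∈ P, ∀ K' : Finset (Fin n),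
        K'.card = k + 1 → insert a (P.erase x) ⊆ K' → s < t K'}) _ ?_ ?_
  · have : 0 ≤ 1 - s := by linarith
    positivity
  · intro K P hK hPK hP
    have hc : 2 * m ≤ (Finset.univ \ K).card := by
      rw [Finset.card_sdiff_of_subset (Finset.subset_univ _), hK, Finset.card_univ,
        Fintype.card_fin]; omega
    obtain ⟨V1, hV1, hV1c⟩ := Finset.exists_subset_card_eq (show m ≤ (Finset.univ \ K).card by omega)
    have hc2 : m ≤ ((Finset.univ \ K) \ V1).card := by
      rw [Finset.card_sdiff_of_subset hV1]; omega
    obtain ⟨V2, hV2, hV2c⟩ := Finset.exists_subset_card_eq hc2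
    have d1 : Disjoint V1 K := Finset.sdiff_disjoint.mono_left hV1
    have d2 : Disjoint V2 K := Finset.sdiff_disjoint.mono_left (hV2.trans Finset.sdiff_subset)
    have d12 : Disjoint V1 V2 := (Finset.sdiff_disjoint.mono_left hV2).symm
    refine le_trans (measureReal_mono ?_ (measure_ne_top _ _))
      (shell_prob m k j s hs0 hs1 K P V1 V2 hPK hP d1 d2 d12 hV1c hV2c)
    intro t ht a ha
    obtain ⟨x, hx, h⟩ := ht a (Finset.disjoint_left.mp d1 ha)
    refine ⟨x, hx, fun R hR => h _ ?_ Finset.subset_union_left⟩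
    rw [Finset.mem_powersetCard] at hR
    rw [Finset.card_union_of_disjoint, Finset.card_insert_of_notMem, Finset.card_erase_of_mem hx,
      hP, hR.2]
    · omega
    · intro h
      exact Finset.disjoint_left.mp d1 ha (hPK (Finset.mem_of_mem_erase h))
    · rw [Finset.disjoint_left]
      intro y hy hyR
      rcases Finset.mem_insert.mp hy with h | h
      · subst h; exact Finset.disjoint_left.mp d12 ha (hR.1 hyR)
      · exact Finset.disjoint_left.mp d2 (hR.1 hyR) (hPK (Finset.mem_of_mem_erase h))

end RSC

namespace RSC

lemma choose_lower (r n : ℕ) (h : 2 * r ≤ n) :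
    (n : ℝ) ^ r ≤ (2 ^ r * r.factorial : ℝ) * (n.choose r : ℝ) := by
  have h1 : (((n + 1 - r : ℕ) : ℝ)) ^ r ≤ r.factorial * n.choose r := by
    have := Nat.pow_le_choose (α := ℝ) r n
    rwa [div_le_iff₀ (by positivity), mul_comm] at this
  have h2 : (n : ℝ) ≤ 2 * ((n + 1 - r : ℕ) : ℝ) := by
    exact_mod_cast (by omega : n ≤ 2 * (n + 1 - r))
  calc (n : ℝ) ^ r ≤ (2 * ((n + 1 - r : ℕ) : ℝ)) ^ r := by gcongr
    _ = 2 ^ r * ((n + 1 - r : ℕ) : ℝ) ^ r := by rw [mul_pow]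
    _ ≤ 2 ^ r * (r.factorial * n.choose r) := by gcongr
    _ = _ := by ring

lemma choose_add_le (a r s : ℕ) :
    (a + s).choose (r + 1) ≤ a.choose (r + 1) + s * (a + s) ^ r := by
  induction s with
  | zero => simp
  | succ s ih =>
    have h1 : (a + s + 1).choose (r + 1) = (a + s).choose r + (a + s).choose (r + 1) :=
      Nat.choose_succ_succ _ _
    have h2 := Nat.choose_le_pow (a + s) r
    have h3 : (a + s) ^ r ≤ (a + s + 1) ^ r := Nat.pow_le_pow_left (by omega) r
    have h4 : s * (a + s) ^ r ≤ s * (a + s + 1) ^ r := Nat.mul_le_mul_left _ h3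
    rw [← add_assoc, h1, Nat.succ_mul]
    omega

lemma dd_upper {n k i : ℕ} (hik : i < k) (hn : k + 1 ≤ n) :
    ((dd n k i : ℕ) : ℝ) ≤ (k + 1) * (n : ℝ) ^ (k - i) := by
  have h := choose_add_le (n - (k + 1)) (k - i) (k + 1 - i)
  rw [show n - (k + 1) + (k + 1 - i) = n - i by omega,
    show k - i + 1 = k + 1 - i by omega] at h
  have h3 : (n - i) ^ (k - i) ≤ n ^ (k - i) := Nat.pow_le_pow_left (by omega) _
  have h4 : (k + 1 - i) * (n - i) ^ (k - i) ≤ (k + 1) * n ^ (k - i) :=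
    Nat.mul_le_mul (by omega) h3
  have h5 : dd n k i ≤ (k + 1) * n ^ (k - i) := by
    unfold dd; omega
  exact_mod_cast h5

lemma dd_lower {n k i : ℕ} (hik : i < k) (hn : 4 * k + 4 ≤ n) :
    (n : ℝ) ^ (k - i) ≤ (4 ^ (k - i) * (k - i).factorial : ℝ) * ((dd n k i + 1 : ℕ) : ℝ) := by
  have h1 : (n - i - 1 + 1).choose (k - i + 1) =
    (n - i - 1).choose (k - i) + (n - i - 1).choose (k - i + 1) := Nat.choose_succ_succ _ _
  rw [show n - i - 1 + 1 = n - i by omega, show k - i + 1 = k + 1 - i by omega] at h1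
  have h2 : (n - (k + 1)).choose (k + 1 - i) ≤ (n - i - 1).choose (k + 1 - i) :=
    Nat.choose_le_choose _ (by omega)
  have h3 : (n - i - 1).choose (k - i) ≤ dd n k i + 1 := by unfold dd; omega
  have h4 := choose_lower (k - i) (n - i - 1) (by omega)
  have h5 : (n : ℝ) ≤ 2 * ((n - i - 1 : ℕ) : ℝ) := by
    exact_mod_cast (by omega : n ≤ 2 * (n - i - 1))
  calc (n : ℝ) ^ (k - i) ≤ (2 * ((n - i - 1 : ℕ) : ℝ)) ^ (k - i) := by gcongr
    _ = 2 ^ (k - i) * ((n - i - 1 : ℕ) : ℝ) ^ (k - i) := by rw [mul_pow]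
    _ ≤ 2 ^ (k - i) * ((2 ^ (k - i) * (k - i).factorial : ℝ) *
          ((n - i - 1).choose (k - i) : ℝ)) := by gcongr
    _ ≤ 2 ^ (k - i) * ((2 ^ (k - i) * (k - i).factorial : ℝ) * ((dd n k i + 1 : ℕ) : ℝ)) := by
        gcongr
    _ = _ := by
        rw [show (4 : ℝ) = 2 * 2 by norm_num, mul_pow]; ring

lemma one_sub_pow_lower (b : ℝ) (hb : b < 1) (d : ℕ) :
    Real.exp (-(d * (b / (1 - b)))) ≤ (1 - b) ^ d := by
  have h1 : 0 < 1 - b := by linarith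
  have h2 : Real.exp (-(b / (1 - b))) ≤ 1 - b := by
    rw [Real.exp_neg, inv_le_comm₀ (Real.exp_pos _) h1]
    have := Real.add_one_le_exp (b / (1 - b))
    have e : b / (1 - b) + 1 = (1 - b)⁻¹ := by field_simp; ring
    linarith
  calc Real.exp (-(d * (b / (1 - b)))) = Real.exp (-(b / (1 - b))) ^ d := by
        rw [← Real.exp_nat_mul]; ring_nf
    _ ≤ _ := by gcongr

lemma one_sub_pow_upper (b : ℝ) (hb : b ≤ 1) (d : ℕ) :
    (1 - b) ^ d ≤ Real.exp (-(d * b)) := by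
  have h2 : 1 - b ≤ Real.exp (-b) := by
    have := Real.add_one_le_exp (-b); linarith
  calc (1 - b) ^ d ≤ Real.exp (-b) ^ d := by
        apply pow_le_pow_left₀ (by linarith) h2
    _ = _ := by rw [← Real.exp_nat_mul]; ring_nf

/-- fourth root of the logarithm -/
noncomputable def uu (n : ℕ) : ℝ := Real.sqrt (Real.sqrt (Real.log n))

lemma uu_tendsto : Tendsto uu atTop atTop :=
  Real.tendsto_sqrt_atTop.comp (Real.tendsto_sqrt_atTop.comp
    (Real.tendsto_log_atTop.comp tendsto_natCast_atTop_atTop))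

lemma uu_pow {n : ℕ} : uu n ^ 4 = Real.log n := by
  have h : 0 ≤ Real.log n := Real.log_natCast_nonneg n
  rw [show 4 = 2 * 2 by norm_num, pow_mul, uu, Real.sq_sqrt (Real.sqrt_nonneg _), Real.sq_sqrt h]

lemma exp_uu {n : ℕ} (hn : 1 ≤ n) : Real.exp (uu n ^ 4) = n := by
  rw [uu_pow, Real.exp_log (by exact_mod_cast hn)]

lemma uu_pow_div (m : ℕ) : Tendsto (fun n : ℕ => uu n ^ m / (n : ℝ)) atTop (nhds 0) := by
  have h := (Real.tendsto_pow_mul_exp_neg_atTop_nhds_zero m).comp uu_tendsto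
  refine squeeze_zero' ?_ ?_ h
  · exact Eventually.of_forall fun n => div_nonneg (pow_nonneg (Real.sqrt_nonneg _) _)
      (Nat.cast_nonneg _)
  · filter_upwards [uu_tendsto.eventually_ge_atTop 1, eventually_ge_atTop 1] with n h1 h2
    have h3 : uu n ≤ uu n ^ 4 := le_self_pow₀ h1 (by norm_num)
    have h4 : Real.exp (uu n) ≤ n := by rw [← exp_uu h2]; exact Real.exp_le_exp.2 h3
    simp only [Function.comp, Real.exp_neg, ← div_eq_mul_inv]
    have := Real.exp_pos (uu n)
    gcongr

/-- a choice of centre -/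
noncomputable def cen (i : ℕ) {n : ℕ} (K : Finset (Fin n)) : Finset (Fin n) :=
  if h : i ≤ K.card then (Finset.exists_subset_card_eq h).choose else ∅

lemma cen_sub {i n : ℕ} {K : Finset (Fin n)} (h : i ≤ K.card) : cen i K ⊆ K := by
  rw [cen, dif_pos h]; exact (Finset.exists_subset_card_eq h).choose_spec.1

lemma cen_card {i n : ℕ} {K : Finset (Fin n)} (h : i ≤ K.card) : (cen i K).card = i := by
  rw [cen, dif_pos h]; exact (Finset.exists_subset_card_eq h).choose_spec.2

noncomputable def qq (k i : ℕ) (a b : ℕ → ℝ) (n : ℕ) : ℝ :=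
  (n.choose (k + 1) : ℝ) * (a n * (1 - b n) ^ dd n k i)

noncomputable def good (k i n : ℕ) (a b : ℝ) (t : Finset (Fin n) → ℝ) :
    Finset (Finset (Fin n)) :=
  (Finset.powersetCard (k + 1) Finset.univ).filter (fun K => t ∈ EvI k n a b K (cen i K))

lemma cheb_tendsto {k i : ℕ} (hik : i < k) (a b : ℕ → ℝ) (ha : ∀ᶠ n in atTop, 0 < a n)
    (hab : ∀ᶠ n in atTop, a n ≤ b n) (hb : Tendsto b atTop (nhds 0))
    (hbM : Tendsto (fun n : ℕ => b n * (n : ℝ) ^ (k - i - 1)) atTop (nhds 0))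
    (hq : Tendsto (qq k i a b) atTop atTop) :
    Tendsto (fun n => (birthMeasure n).real
      {t | ((good k i n (a n) (b n) t).card : ℝ) ≤ qq k i a b n / 2}) atTop (nhds 0) := by
  have hx : Tendsto (fun n : ℕ => (1 - b n) ^ ((k + 1) ^ 2 * n ^ (k - i - 1))) atTop (nhds 1) := by
    have h1 : Tendsto (fun n : ℕ => 1 - ((k : ℝ) + 1) ^ 2 * (b n * (n : ℝ) ^ (k - i - 1))) atTop
        (nhds 1) := by
      have := (hbM.const_mul (((k : ℝ) + 1) ^ 2)).const_sub 1
      simpa using this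
    refine tendsto_of_tendsto_of_tendsto_of_le_of_le' h1 tendsto_const_nhds ?_ ?_
    · filter_upwards [hb.eventually_lt_const (zero_lt_one)] with n hn
      have := one_add_mul_le_pow (a := - b n) (by linarith) ((k + 1) ^ 2 * n ^ (k - i - 1))
      push_cast at this
      have e : (1 + -b n) = 1 - b n := by ring
      rw [e] at this
      linarith
    · filter_upwards [hb.eventually_lt_const (zero_lt_one), ha, hab] with n h1 h2 h3
      exact pow_le_one₀ (by linarith) (by linarith)
  have hfin : Tendsto (fun n : ℕ => 4 * (1 / qq k i a b n +
      (((1 - b n) ^ ((k + 1) ^ 2 * n ^ (k - i - 1)))⁻¹ - 1))) atTop (nhds 0) := by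
    have h1 := (hx.inv₀ one_ne_zero).sub_const 1
    have h2 := hq.inv_tendsto_atTop
    have h3 := (h2.add h1).const_mul 4
    simp only [inv_one, sub_self, add_zero, mul_zero] at h3
    refine h3.congr fun n => ?_
    simp
  refine squeeze_zero' (Eventually.of_forall fun n => measureReal_nonneg) ?_ hfin
  filter_upwards [hb.eventually_lt_const (zero_lt_one), ha, hab, eventually_ge_atTop (k + 1)]
    with n h1 h2 h3 h4
  exact cheb hik h4 (cen i) (fun K hK => cen_sub (by omega)) (fun K hK => cen_card (by omega))
    (a n) (b n) h2 h3 h1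

end RSC

namespace RSC

lemma whp_good {k i : ℕ} (hik : i < k) (a b : ℕ → ℝ) (w : ℕ → ℕ) (ha : ∀ᶠ n in atTop, 0 < a n)
    (hab : ∀ᶠ n in atTop, a n ≤ b n) (hb : Tendsto b atTop (nhds 0))
    (hbM : Tendsto (fun n : ℕ => b n * (n : ℝ) ^ (k - i - 1)) atTop (nhds 0))
    (hq : Tendsto (qq k i a b) atTop atTop) (hw : ∀ᶠ n in atTop, 2 * (w n : ℝ) ≤ qq k i a b n) :
    Tendsto (fun n => (birthMeasure n).real
      {t | (good k i n (a n) (b n) t).card ≤ w n}) atTop (nhds 0) := by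
  refine squeeze_zero' (Eventually.of_forall fun n => measureReal_nonneg) ?_
    (cheb_tendsto hik a b ha hab hb hbM hq)
  filter_upwards [hw] with n hn
  have := isProb_birth n
  refine measureReal_mono ?_ (measure_ne_top _ _)
  intro t ht
  simp only [Set.mem_ofPred_eq] at ht ⊢
  have : ((good k i n (a n) (b n) t).card : ℝ) ≤ w n := by exact_mod_cast ht
  linarith

lemma qq_lower {k i n : ℕ} (hik : i < k) (hn : 2 * (k + 1) ≤ n) (a b : ℕ → ℝ)
    (ha : 0 ≤ a n) (hb0 : 0 ≤ b n) (hb : b n ≤ 1 / 2) (X : ℝ) (hX : b n * (n : ℝ) ^ (k - i) ≤ X) :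
    (1 / (2 ^ (k + 1) * (k + 1).factorial) : ℝ) *
      ((n : ℝ) ^ (k + 1) * (a n * Real.exp (-(2 * (k + 1) * X)))) ≤ qq k i a b n := by
  have h1 : (1 / (2 ^ (k + 1) * (k + 1).factorial) : ℝ) * (n : ℝ) ^ (k + 1) ≤ n.choose (k + 1) := by
    rw [one_div_mul_eq_div, div_le_iff₀ (by positivity), mul_comm]
    exact choose_lower (k + 1) n hn
  have h2 := one_sub_pow_lower (b n) (by linarith) (dd n k i)
  have h3 : b n / (1 - b n) ≤ 2 * b n := by
    rw [div_le_iff₀ (by linarith)]; nlinarith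
  have h4 : (dd n k i : ℝ) * (b n / (1 - b n)) ≤ 2 * (k + 1) * X := by
    have := dd_upper hik (by omega : k + 1 ≤ n)
    calc (dd n k i : ℝ) * (b n / (1 - b n)) ≤ ((k + 1) * (n : ℝ) ^ (k - i)) * (2 * b n) := by
          apply mul_le_mul this h3 _ (by positivity)
          exact div_nonneg hb0 (by linarith)
      _ = 2 * (k + 1) * (b n * (n : ℝ) ^ (k - i)) := by ring
      _ ≤ _ := by gcongr
  have h5 : Real.exp (-(2 * (k + 1) * X)) ≤ (1 - b n) ^ dd n k i :=
    le_trans (Real.exp_le_exp.2 (by linarith)) h2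
  unfold qq
  calc _ = ((1 / (2 ^ (k + 1) * (k + 1).factorial) : ℝ) * (n : ℝ) ^ (k + 1)) *
        (a n * Real.exp (-(2 * (k + 1) * X))) := by ring
    _ ≤ _ := by gcongr

lemma whp_many {k i : ℕ} (hik : i < k) (a b : ℕ → ℝ) (ha : ∀ᶠ n in atTop, 0 < a n)
    (hab : ∀ᶠ n in atTop, a n ≤ b n) (hb : Tendsto b atTop (nhds 0))
    (hbM : Tendsto (fun n : ℕ => b n * (n : ℝ) ^ (k - i - 1)) atTop (nhds 0))
    (c : ℝ) (hc : 0 < c) (hq : ∀ᶠ n in atTop, c * (uu n ^ 3 * (n : ℝ) ^ i) ≤ qq k i a b n) :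
    Tendsto (fun n => (birthMeasure n).real
      {t | (good k i n (a n) (b n) t).card ≤ n.choose i}) atTop (nhds 0) := by
  have hu : Tendsto (fun n => c * uu n ^ 3) atTop atTop :=
    ((tendsto_pow_atTop (by norm_num)).comp uu_tendsto).const_mul_atTop hc
  refine whp_good hik a b (fun n => n.choose i) ha hab hb hbM ?_ ?_
  · refine tendsto_atTop_mono' _ ?_ hu
    filter_upwards [hq, eventually_ge_atTop 1, hu.eventually_ge_atTop 0] with n h1 h2 h3
    have h4 : (1 : ℝ) ≤ (n : ℝ) ^ i := one_le_pow₀ (by exact_mod_cast h2)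
    nlinarith
  · filter_upwards [hq, hu.eventually_ge_atTop 2] with n h1 h2
    have h3 : (n.choose i : ℝ) ≤ (n : ℝ) ^ i := by exact_mod_cast Nat.choose_le_pow n i
    have h4 : (0 : ℝ) ≤ (n : ℝ) ^ i := by positivity
    nlinarith

lemma inv_pow_tendsto (r : ℕ) (hr : 0 < r) :
    Tendsto (fun n : ℕ => 1 / (n : ℝ) ^ r) atTop (nhds 0) := by
  have := ((tendsto_pow_atTop (α := ℝ) hr.ne').comp tendsto_natCast_atTop_atTop).inv_tendsto_atTop
    (f := (fun n : ℕ => (n : ℝ) ^ r))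
  refine this.congr fun n => by simp

/-- `u^m / n^(r+1)` tends to zero -/
lemma uu_div_pow (m r : ℕ) (hr : 0 < r) :
    Tendsto (fun n : ℕ => uu n ^ m / (n : ℝ) ^ r) atTop (nhds 0) := by
  refine squeeze_zero' ?_ ?_ (uu_pow_div m)
  · exact Eventually.of_forall fun n => div_nonneg (pow_nonneg (Real.sqrt_nonneg _) _)
      (pow_nonneg (Nat.cast_nonneg _) _)
  · filter_upwards [eventually_ge_atTop 1] with n hn
    have h1 : (1 : ℝ) ≤ n := by exact_mod_cast hn
    have h2 : (n : ℝ) ≤ (n : ℝ) ^ r := le_self_pow₀ h1 hr.ne'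
    have : 0 ≤ uu n ^ m := pow_nonneg (Real.sqrt_nonneg _) _
    gcongr

lemma uu_pos : ∀ᶠ n in atTop, 0 < uu n := uu_tendsto.eventually_gt_atTop 0

lemma whpA {k i : ℕ} (hik : i < k) :
    Tendsto (fun n : ℕ => (birthMeasure n).real
      {t | (good k i n (uu n ^ 3 / (n : ℝ) ^ (k - i + 1)) (1 / (n : ℝ) ^ (k - i)) t).card ≤
        n.choose i}) atTop (nhds 0) := by
  have hr : 0 < k - i := by omega
  have hb := inv_pow_tendsto (k - i) hr
  refine whp_many hik (fun n => uu n ^ 3 / (n : ℝ) ^ (k - i + 1)) (fun n => 1 / (n : ℝ) ^ (k - i))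
    ?_ ?_ hb ?_
    ((1 / (2 ^ (k + 1) * (k + 1).factorial) : ℝ) * Real.exp (-(2 * (k + 1) * 1)))
    (by positivity) ?_
  · filter_upwards [uu_pos, eventually_gt_atTop 0] with n h1 h2
    have : (0 : ℝ) < n := by exact_mod_cast h2
    positivity
  · filter_upwards [(uu_pow_div 3).eventually_lt_const zero_lt_one, eventually_gt_atTop 0]
      with n h1 h2
    have : (0 : ℝ) < n := by exact_mod_cast h2
    rw [pow_succ (n : ℝ), div_mul_eq_div_div_swap]
    gcongr
  · refine (inv_pow_tendsto 1 one_pos).congr' ?_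
    simp only [pow_one]
    filter_upwards [eventually_gt_atTop 0] with n h2
    have : (0 : ℝ) < n := by exact_mod_cast h2
    obtain ⟨r, hr'⟩ : ∃ r, k - i = r + 1 := ⟨k - i - 1, by omega⟩
    rw [hr', Nat.add_sub_cancel, pow_succ (n : ℝ)]
    field_simp
  · filter_upwards [uu_pos, eventually_ge_atTop (2 * (k + 1)),
      hb.eventually_le_const (show (0 : ℝ) < 1 / 2 by norm_num)] with n h1 h2 h3
    have hn : (0 : ℝ) < n := by exact_mod_cast (by omega : 0 < n)
    have := qq_lower hik h2 (fun n => uu n ^ 3 / (n : ℝ) ^ (k - i + 1))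
      (fun n => 1 / (n : ℝ) ^ (k - i)) (by positivity) (by positivity) h3 1
      (by field_simp; exact le_refl _)
    refine le_trans (le_of_eq ?_) this
    have e : (n : ℝ) ^ (k + 1) = (n : ℝ) ^ (k - i + 1) * (n : ℝ) ^ i := by
      rw [← pow_add]; congr 1; omega
    rw [e]
    field_simp

lemma whpB {k i : ℕ} (hik : i < k) :
    Tendsto (fun n : ℕ => (birthMeasure n).real
      {t | (good k i n (1 / (n : ℝ) ^ (k - i)) (uu n ^ 3 / (n : ℝ) ^ (k - i)) t).card ≤
        n.choose i}) atTop (nhds 0) := by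
  have hr : 0 < k - i := by omega
  have hb := uu_div_pow 3 (k - i) hr
  refine whp_many hik (fun n => 1 / (n : ℝ) ^ (k - i)) (fun n => uu n ^ 3 / (n : ℝ) ^ (k - i))
    ?_ ?_ hb ?_
    (1 / (2 ^ (k + 1) * (k + 1).factorial) : ℝ)
    (by positivity) ?_
  · filter_upwards [eventually_gt_atTop 0] with n h2
    have : (0 : ℝ) < n := by exact_mod_cast h2
    positivity
  · filter_upwards [uu_tendsto.eventually_ge_atTop 1, eventually_gt_atTop 0]
      with n h1 h2
    have : (0 : ℝ) < n := by exact_mod_cast h2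
    have : 1 ≤ uu n ^ 3 := one_le_pow₀ h1
    gcongr
  · refine (uu_pow_div 3).congr' ?_
    filter_upwards [eventually_gt_atTop 0] with n h2
    have : (0 : ℝ) < n := by exact_mod_cast h2
    obtain ⟨r, hr'⟩ : ∃ r, k - i = r + 1 := ⟨k - i - 1, by omega⟩
    rw [hr', Nat.add_sub_cancel, pow_succ (n : ℝ)]
    field_simp
  · filter_upwards [uu_pos, eventually_ge_atTop (2 * (k + 1)),
      hb.eventually_le_const (show (0 : ℝ) < 1 / 2 by norm_num),
      uu_tendsto.eventually_ge_atTop (2 * (k + 1) + 1)] with n h1 h2 h3 h4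
    have hn : (0 : ℝ) < n := by exact_mod_cast (by omega : 0 < n)
    have := qq_lower hik h2 (fun n => 1 / (n : ℝ) ^ (k - i))
      (fun n => uu n ^ 3 / (n : ℝ) ^ (k - i)) (by positivity) (by positivity) h3 (uu n ^ 3)
      (by field_simp; exact le_refl _)
    refine le_trans ?_ this
    have e : (n : ℝ) ^ (k + 1) = (n : ℝ) ^ (k - i) * (n : ℝ) ^ i * n := by
      rw [← pow_add, ← pow_succ]; congr 1; omega
    have e2 : (n : ℝ) ^ (k + 1) * (1 / (n : ℝ) ^ (k - i) * Real.exp (-(2 * (k + 1) * uu n ^ 3))) =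
        (n * Real.exp (-(2 * (k + 1) * uu n ^ 3))) * (n : ℝ) ^ i := by
      rw [e]; field_simp
    have e3 : uu n ^ 3 ≤ n * Real.exp (-(2 * (k + 1) * uu n ^ 3)) := by
      rw [← exp_uu (by omega : 1 ≤ n), ← Real.exp_add]
      have h5 : uu n ^ 3 ≤ uu n ^ 4 + -(2 * (k + 1) * uu n ^ 3) := by
        have : 0 ≤ uu n ^ 3 := by positivity
        nlinarith
      have h6 := Real.add_one_le_exp (uu n ^ 3)
      have h7 := Real.exp_le_exp.2 h5
      linarith
    rw [e2]
    gcongr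

end RSC

namespace RSC

noncomputable def LL (j n : ℕ) : ℝ := (j + 1) * uu n ^ 4 + 2 * Real.log (uu n)

noncomputable def TT (k j n : ℕ) : ℝ := LL j n / ((dd n k j + 1 : ℕ) : ℝ)

lemma exp_LL {j n : ℕ} (hn : 1 ≤ n) (hu : 0 < uu n) :
    Real.exp (-LL j n) = 1 / ((n : ℝ) ^ (j + 1) * uu n ^ 2) := by
  have h : Real.exp (LL j n) = (n : ℝ) ^ (j + 1) * uu n ^ 2 := by
    rw [LL, Real.exp_add]
    congr 1
    · rw [← exp_uu hn, ← Real.exp_nat_mul]; push_cast; rfl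
    · have : Real.exp (2 * Real.log (uu n)) = Real.exp (Real.log (uu n)) ^ 2 := by
        rw [← Real.exp_nat_mul]; push_cast; rfl
      rw [this, Real.exp_log hu]
  rw [Real.exp_neg, h, one_div]

lemma LL_bounds {j n : ℕ} (hu : 1 ≤ uu n) :
    uu n ^ 4 ≤ LL j n ∧ LL j n ≤ (j + 3) * uu n ^ 4 := by
  have h0 : 0 ≤ Real.log (uu n) := Real.log_nonneg hu
  have h1 : Real.log (uu n) ≤ uu n := Real.log_le_self (by linarith)
  have h2 : uu n ≤ uu n ^ 4 := le_self_pow₀ hu (by norm_num)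
  have h3 : (0 : ℝ) ≤ j * uu n ^ 4 := by positivity
  unfold LL
  constructor <;> nlinarith

noncomputable def CC (k j : ℕ) : ℝ := (j + 3) * (4 ^ (k - j) * (k - j).factorial)

lemma TT_upper {k j n : ℕ} (hjk : j < k) (hn : 4 * k + 4 ≤ n) (hu : 1 ≤ uu n) :
    TT k j n ≤ CC k j * (uu n ^ 4 / (n : ℝ) ^ (k - j)) := by
  have h1 := (LL_bounds (j := j) hu).2
  have h2 := dd_lower hjk hn
  have hn0 : (0 : ℝ) < n := by exact_mod_cast (by omega : 0 < n)
  have hD : (0 : ℝ) < ((dd n k j + 1 : ℕ) : ℝ) := by positivity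
  unfold TT CC
  rw [div_le_iff₀ hD, mul_div_assoc', div_mul_eq_mul_div, le_div_iff₀ (by positivity)]
  calc LL j n * (n : ℝ) ^ (k - j) ≤ ((j + 3) * uu n ^ 4) * ((4 ^ (k - j) * (k - j).factorial : ℝ) * ((dd n k j + 1 : ℕ) : ℝ)) := by
        apply mul_le_mul h1 h2 (by positivity) (by positivity)
    _ = _ := by ring

lemma TT_nonneg {k j n : ℕ} (hu : 1 ≤ uu n) : 0 ≤ TT k j n := by
  have := (LL_bounds (j := j) hu).1
  unfold TT
  apply div_nonneg _ (by positivity)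
  have : 0 ≤ uu n ^ 4 := by positivity
  linarith

lemma uu_ge (c : ℝ) : ∀ᶠ n in atTop, c ≤ uu n := uu_tendsto.eventually_ge_atTop c

lemma TT_tendsto {k j : ℕ} (hjk : j < k) : Tendsto (TT k j) atTop (nhds 0) := by
  have h := (uu_div_pow 4 (k - j) (by omega)).const_mul (CC k j)
  rw [mul_zero] at h
  refine squeeze_zero' ?_ ?_ h
  · filter_upwards [uu_ge 1] with n h1 using TT_nonneg h1
  · filter_upwards [uu_ge 1, eventually_ge_atTop (4 * k + 4)] with n h1 h2 using TT_upper hjk h2 h1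

lemma TT_tendsto2 {k j : ℕ} (hjk : j < k) :
    Tendsto (fun n : ℕ => TT k j n * (n : ℝ) ^ (k - j - 1)) atTop (nhds 0) := by
  have h := (uu_pow_div 4).const_mul (CC k j)
  rw [mul_zero] at h
  refine squeeze_zero' ?_ ?_ h
  · filter_upwards [uu_ge 1] with n h1 using mul_nonneg (TT_nonneg h1) (by positivity)
  · filter_upwards [uu_ge 1, eventually_ge_atTop (4 * k + 4)] with n h1 h2
    have hn : (0 : ℝ) < n := by exact_mod_cast (by omega : 0 < n)
    have h3 := TT_upper hjk h2 h1
    obtain ⟨r, hr'⟩ : ∃ r, k - j = r + 1 := ⟨k - j - 1, by omega⟩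
    rw [hr'] at h3 ⊢
    rw [Nat.add_sub_cancel]
    calc TT k j n * (n : ℝ) ^ r ≤ (CC k j * (uu n ^ 4 / (n : ℝ) ^ (r + 1))) * (n : ℝ) ^ r := by
          gcongr
      _ = _ := by rw [pow_succ (n : ℝ)]; field_simp

lemma LT_tendsto {k j : ℕ} (hjk : j < k) :
    Tendsto (fun n : ℕ => LL j n * TT k j n) atTop (nhds 0) := by
  have h := (uu_div_pow 8 (k - j) (by omega)).const_mul ((j + 3) * CC k j)
  rw [mul_zero] at h
  refine squeeze_zero' ?_ ?_ h
  · filter_upwards [uu_ge 1] with n h1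
    have := (LL_bounds (j := j) h1).1
    have : 0 ≤ uu n ^ 4 := by positivity
    exact mul_nonneg (by linarith) (TT_nonneg h1)
  · filter_upwards [uu_ge 1, eventually_ge_atTop (4 * k + 4)] with n h1 h2
    have h3 := TT_upper hjk h2 h1
    have h4 := (LL_bounds (j := j) h1).2
    calc LL j n * TT k j n ≤ ((j + 3) * uu n ^ 4) * (CC k j * (uu n ^ 4 / (n : ℝ) ^ (k - j))) :=
          mul_le_mul h4 h3 (TT_nonneg h1) (by positivity)
      _ = _ := by ring

lemma s_le_T {k j : ℕ} (hjk : j < k) :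
    ∀ᶠ n : ℕ in atTop, uu n ^ 3 / (n : ℝ) ^ (k - j) ≤ TT k j n := by
  filter_upwards [uu_ge (k + 2), eventually_ge_atTop (k + 1)] with n h1 h2
  have hn : (1 : ℝ) ≤ n := by exact_mod_cast (by omega : 1 ≤ n)
  have hk : (0 : ℝ) ≤ k := by positivity
  have hu : 1 ≤ uu n := by linarith
  have h3 := (LL_bounds (j := j) hu).1
  have h4 := dd_upper hjk h2
  have h5 : (1 : ℝ) ≤ (n : ℝ) ^ (k - j) := one_le_pow₀ hn
  have h6 : ((dd n k j + 1 : ℕ) : ℝ) ≤ (k + 2) * (n : ℝ) ^ (k - j) := by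
    push_cast; linarith
  unfold TT
  rw [div_le_div_iff₀ (by positivity) (by positivity)]
  calc uu n ^ 3 * ((dd n k j + 1 : ℕ) : ℝ) ≤ uu n ^ 3 * ((k + 2) * (n : ℝ) ^ (k - j)) := by gcongr
    _ ≤ uu n ^ 3 * (uu n * (n : ℝ) ^ (k - j)) := by gcongr
    _ = uu n ^ 4 * (n : ℝ) ^ (k - j) := by ring
    _ ≤ _ := by gcongr

lemma whp3 {k j : ℕ} (hjk : j < k) :
    Tendsto (fun n : ℕ => (birthMeasure n).real
      {t | (good k j n (uu n ^ 3 / (n : ℝ) ^ (k - j)) (TT k j n) t).card ≤ 0})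
      atTop (nhds 0) := by
  have hc : (0 : ℝ) < (1 / (2 ^ (k + 1) * (k + 1).factorial) : ℝ) * Real.exp (-1) := by positivity
  have hu : Tendsto (fun n => ((1 / (2 ^ (k + 1) * (k + 1).factorial) : ℝ) * Real.exp (-1)) * uu n)
    atTop atTop := uu_tendsto.const_mul_atTop hc
  have hq : Tendsto (qq k j (fun n => uu n ^ 3 / (n : ℝ) ^ (k - j)) (TT k j)) atTop atTop := by
    refine tendsto_atTop_mono' _ ?_ hu
    filter_upwards [uu_ge 1, eventually_ge_atTop (4 * k + 4),
      (TT_tendsto hjk).eventually_le_const (show (0 : ℝ) < 1 / 2 by norm_num),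
      (LT_tendsto hjk).eventually_le_const (show (0 : ℝ) < 1 / 2 by norm_num)] with n h1 h2 h3 h4
    have hn : (0 : ℝ) < n := by exact_mod_cast (by omega : 0 < n)
    have hT0 : 0 ≤ TT k j n := TT_nonneg h1
    have h5 : (1 / (2 ^ (k + 1) * (k + 1).factorial) : ℝ) * (n : ℝ) ^ (k + 1) ≤
        n.choose (k + 1) := by
      rw [one_div_mul_eq_div, div_le_iff₀ (by positivity), mul_comm]
      exact choose_lower (k + 1) n (by omega)
    have hL0 : 0 ≤ LL j n := le_trans (by positivity) (LL_bounds (j := j) h1).1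
    have h6 : Real.exp (-1) * (1 / ((n : ℝ) ^ (j + 1) * uu n ^ 2)) ≤
        (1 - TT k j n) ^ dd n k j := by
      rw [← exp_LL (by omega) (by linarith), ← Real.exp_add]
      have g1 := one_sub_pow_lower (TT k j n) (by linarith) (dd n k j + 1)
      have g2 : (1 - TT k j n) ^ (dd n k j + 1) ≤ (1 - TT k j n) ^ dd n k j :=
        pow_le_pow_of_le_one (by linarith) (by linarith) (by omega)
      refine le_trans (le_trans (Real.exp_le_exp.2 ?_) g1) g2
      have g3 : ((dd n k j + 1 : ℕ) : ℝ) * (TT k j n / (1 - TT k j n)) =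
          LL j n / (1 - TT k j n) := by
        have hD : ((dd n k j + 1 : ℕ) : ℝ) ≠ 0 := by positivity
        have : ((dd n k j + 1 : ℕ) : ℝ) * TT k j n = LL j n := by
          unfold TT; field_simp
        rw [mul_div_assoc', this]
      have g4 : LL j n / (1 - TT k j n) ≤ LL j n + 1 := by
        rw [div_le_iff₀ (by linarith)]
        nlinarith
      rw [g3]; linarith
    unfold qq
    have e : (n : ℝ) ^ (k + 1) = (n : ℝ) ^ (k - j) * (n : ℝ) ^ (j + 1) := by
      rw [← pow_add]; congr 1; omega
    calc _ = ((1 / (2 ^ (k + 1) * (k + 1).factorial) : ℝ) * (n : ℝ) ^ (k + 1)) *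
        (uu n ^ 3 / (n : ℝ) ^ (k - j) * (Real.exp (-1) * (1 / ((n : ℝ) ^ (j + 1) * uu n ^ 2)))) := by
          rw [e]; field_simp
      _ ≤ _ := by gcongr
  refine whp_good hjk _ _ (fun _ => 0) ?_ (s_le_T hjk) (TT_tendsto hjk) (TT_tendsto2 hjk) hq ?_
  · filter_upwards [uu_pos, eventually_gt_atTop 0] with n h1 h2
    have : (0 : ℝ) < n := by exact_mod_cast h2
    positivity
  · filter_upwards [hq.eventually_ge_atTop 0] with n h1
    simpa using h1

def B1 (k n : ℕ) (s : ℝ) : Set (Finset (Fin n) → ℝ) :=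
  {t | ∀ v : Fin n, ∃ K : Finset (Fin n), K.card = k + 1 ∧ v ∈ K ∧ t K ≤ s}

def B4 (k j n : ℕ) (s : ℝ) : Set (Finset (Fin n) → ℝ) :=
  {t | ∃ K P : Finset (Fin n), K.card = k + 1 ∧ P ⊆ K ∧ P.card = j + 1 ∧
    t ∈ {t : Finset (Fin n) → ℝ | ∀ a ∉ K, ∃ x ∈ P, ∀ K' : Finset (Fin n), K'.card = k + 1 →
      insert a (P.erase x) ⊆ K' → s < t K'}}

def B5 (k j n : ℕ) (T : ℝ) : Set (Finset (Fin n) → ℝ) :=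
  {t | ∃ K C : Finset (Fin n), K.card = k + 1 ∧ C ⊆ K ∧ C.card = j ∧
    t ∈ {t : Finset (Fin n) → ℝ | T < t K ∧ ∀ K' ∈ nb k K C, t K < t K'}}

lemma whp1 (k : ℕ) : Tendsto (fun n : ℕ => (birthMeasure n).real
    (B1 k n (uu n ^ 3 / (n : ℝ) ^ (k + 1)))) atTop (nhds 0) := by
  refine squeeze_zero' (Eventually.of_forall fun n => measureReal_nonneg) ?_ (uu_pow_div 3)
  filter_upwards [eventually_gt_atTop 0, uu_pos,
    (uu_div_pow 3 (k + 1) (by omega)).eventually_le_const zero_lt_one] with n hn hu hs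
  have := isProb_birth n
  have hn' : (0 : ℝ) < n := by exact_mod_cast hn
  have h := bad1 k (⟨0, hn⟩ : Fin n) (uu n ^ 3 / (n : ℝ) ^ (k + 1)) (by positivity) hs
  refine le_trans (measureReal_mono ?_ (measure_ne_top _ _)) (le_trans h (le_of_eq ?_))
  · intro t ht
    exact ht ⟨0, hn⟩
  · rw [pow_succ (n : ℝ)]; field_simp

lemma whp5 {k j : ℕ} (hjk : j < k) : Tendsto (fun n : ℕ => (birthMeasure n).real
    (B5 k j n (TT k j n))) atTop (nhds 0) := by
  have h0 : Tendsto (fun n : ℕ => (2 ^ (k + 1) * (4 ^ (k - j) * (k - j).factorial : ℝ)) *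
      (uu n ^ 2)⁻¹) atTop (nhds 0) := by
    have := ((tendsto_pow_atTop (α := ℝ) (two_ne_zero)).comp uu_tendsto).inv_tendsto_atTop
    have := this.const_mul (2 ^ (k + 1) * (4 ^ (k - j) * (k - j).factorial : ℝ))
    rw [mul_zero] at this
    exact this
  refine squeeze_zero' (Eventually.of_forall fun n => measureReal_nonneg) ?_ h0
  filter_upwards [uu_ge 1, eventually_ge_atTop (4 * k + 4),
      (TT_tendsto hjk).eventually_le_const (show (0 : ℝ) < 1 / 2 by norm_num)] with n h1 h2 h3
  have hn : (0 : ℝ) < n := by exact_mod_cast (by omega : 0 < n)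
  have hT0 : 0 ≤ TT k j n := TT_nonneg h1
  have hD : (0 : ℝ) < ((dd n k j + 1 : ℕ) : ℝ) := by positivity
  refine le_trans (bad5 k j (by omega) (TT k j n) hT0 (by linarith)) ?_
  have h4 := one_sub_pow_upper (TT k j n) (by linarith) (dd n k j + 1)
  have h5 : ((dd n k j + 1 : ℕ) : ℝ) * TT k j n = LL j n := by
    unfold TT; field_simp
  rw [h5, exp_LL (by omega) (by linarith)] at h4
  have h6 := dd_lower hjk h2
  have e : (n : ℝ) ^ (k + 1) = (n : ℝ) ^ (k - j) * (n : ℝ) ^ (j + 1) := by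
    rw [← pow_add]; congr 1; omega
  calc (n : ℝ) ^ (k + 1) * 2 ^ (k + 1) * ((1 - TT k j n) ^ (dd n k j + 1) / ((dd n k j + 1 : ℕ) : ℝ))
      ≤ (n : ℝ) ^ (k + 1) * 2 ^ (k + 1) * (1 / ((n : ℝ) ^ (j + 1) * uu n ^ 2) /
          ((dd n k j + 1 : ℕ) : ℝ)) := by gcongr
    _ = (n : ℝ) ^ (k - j) * (2 ^ (k + 1) * ((uu n ^ 2)⁻¹ / ((dd n k j + 1 : ℕ) : ℝ))) := by
        rw [e]; field_simp
    _ ≤ ((4 ^ (k - j) * (k - j).factorial : ℝ) * ((dd n k j + 1 : ℕ) : ℝ)) *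
        (2 ^ (k + 1) * ((uu n ^ 2)⁻¹ / ((dd n k j + 1 : ℕ) : ℝ))) := by gcongr
    _ = _ := by field_simp

lemma whp4 {k j : ℕ} (hjk : j < k) : Tendsto (fun n : ℕ => (birthMeasure n).real
    (B4 k j n (uu n ^ 3 / (n : ℝ) ^ (k - j)))) atTop (nhds 0) := by
  set c : ℝ := 1 / (4 ^ (k - j) * (2 ^ (k - j) * (k - j).factorial)) with hc
  have hcpos : 0 < c := by positivity
  have h0 : Tendsto (fun n : ℕ => 2 ^ (k + 1) * ((n : ℝ) ^ (k + 1) * Real.exp (-(1 / 4) * n)))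
      atTop (nhds 0) := by
    have a0 : Tendsto (fun n : ℕ => (1 / 4 : ℝ) * (n : ℝ)) atTop atTop :=
      tendsto_natCast_atTop_atTop.const_mul_atTop (by norm_num)
    have a1 := ((Real.tendsto_pow_mul_exp_neg_atTop_nhds_zero (k + 1)).comp a0).const_mul
      (2 ^ (k + 1) * 4 ^ (k + 1))
    rw [mul_zero] at a1
    refine a1.congr fun n => ?_
    simp only [Function.comp, mul_pow, one_div, inv_pow, neg_mul]
    field_simp
  have h1 : Tendsto (fun n : ℕ => ((j + 1 : ℕ) : ℝ) * Real.exp (-(c * uu n ^ 3))) atTop (nhds 0) := by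
    have a1 : Tendsto (fun n => c * uu n ^ 3) atTop atTop :=
      ((tendsto_pow_atTop (by norm_num)).comp uu_tendsto).const_mul_atTop hcpos
    have a2 := (Real.tendsto_exp_neg_atTop_nhds_zero.comp a1).const_mul (((j + 1 : ℕ) : ℝ))
    rw [mul_zero] at a2
    exact a2
  refine squeeze_zero' (Eventually.of_forall fun n => measureReal_nonneg) ?_ h0
  filter_upwards [uu_ge 1, eventually_ge_atTop (8 * k + 8),
      (uu_div_pow 3 (k - j) (by omega)).eventually_le_const zero_lt_one,
      h1.eventually_le_const (Real.exp_pos (-1))] with n g1 g2 g3 g4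
  have hn : (0 : ℝ) < n := by exact_mod_cast (by omega : 0 < n)
  obtain ⟨m, hm1, hm2⟩ : ∃ m, k + 1 + 2 * m ≤ n ∧ n ≤ 4 * m := ⟨(n - (k + 1)) / 2, by omega, by omega⟩
  refine le_trans (bad4 m k j hjk _ (by positivity) g3 hm1) ?_
  have h2 := choose_lower (k - j) m (by omega)
  have hm2' : (n : ℝ) ≤ 4 * m := by exact_mod_cast hm2
  have h3 : (n : ℝ) ^ (k - j) ≤ (4 ^ (k - j) * (2 ^ (k - j) * (k - j).factorial)) *
      (m.choose (k - j) : ℝ) := by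
    calc (n : ℝ) ^ (k - j) ≤ (4 * m) ^ (k - j) := by gcongr
      _ = 4 ^ (k - j) * (m : ℝ) ^ (k - j) := by rw [mul_pow]
      _ ≤ 4 ^ (k - j) * ((2 ^ (k - j) * (k - j).factorial) * (m.choose (k - j) : ℝ)) := by gcongr
      _ = _ := by ring
  have h4 : c * uu n ^ 3 ≤ (m.choose (k - j) : ℝ) * (uu n ^ 3 / (n : ℝ) ^ (k - j)) := by
    have : c * (n : ℝ) ^ (k - j) ≤ (m.choose (k - j) : ℝ) := by
      rw [hc, one_div_mul_eq_div, div_le_iff₀ (by positivity), mul_comm]; exact h3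
    rw [mul_div_assoc', le_div_iff₀ (by positivity)]
    calc c * uu n ^ 3 * (n : ℝ) ^ (k - j) = (c * (n : ℝ) ^ (k - j)) * uu n ^ 3 := by ring
      _ ≤ _ := by gcongr
  have h5 := one_sub_pow_upper (uu n ^ 3 / (n : ℝ) ^ (k - j)) g3 (m.choose (k - j))
  have h6 : ((j + 1 : ℕ) : ℝ) * (1 - uu n ^ 3 / (n : ℝ) ^ (k - j)) ^ (m.choose (k - j)) ≤
      Real.exp (-1) := by
    refine le_trans ?_ g4
    gcongr
    exact h5.trans (Real.exp_le_exp.2 (by linarith))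
  have h7 : 0 ≤ ((j + 1 : ℕ) : ℝ) * (1 - uu n ^ 3 / (n : ℝ) ^ (k - j)) ^ (m.choose (k - j)) :=
    mul_nonneg (by positivity) (pow_nonneg (by linarith) _)
  calc _ ≤ (n : ℝ) ^ (k + 1) * 2 ^ (k + 1) * Real.exp (-1) ^ m := by gcongr
    _ = 2 ^ (k + 1) * ((n : ℝ) ^ (k + 1) * Real.exp (-m)) := by
        rw [← Real.exp_nat_mul]; ring_nf
    _ ≤ _ := by
        gcongr
        linarith

end RSC

namespace RSC

lemma shell_of_good {k j n : ℕ} (hj : 1 ≤ j) (hjk : j < k) {t : Finset (Fin n) → ℝ} {s p : ℝ}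
    (h4 : t ∉ B4 k j n s) (hsp : s ≤ p) {K C : Finset (Fin n)} (hK : K.card = k + 1)
    (hCK : C ⊆ K) (hC : C.card = j) (hI : Iso k n t p K C) :
    ¬ CohomConnected (complexAt k n t p) j := by
  have hne : (K \ C).Nonempty := by
    rw [← Finset.card_pos, Finset.card_sdiff_of_subset hCK]; omega
  obtain ⟨w, hw⟩ := hne
  have hw' := Finset.mem_sdiff.1 hw
  have hPc : (insert w C).card = j + 1 := by rw [Finset.card_insert_of_notMem hw'.2, hC]
  have hPK : insert w C ⊆ K := Finset.insert_subset hw'.1 hCK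
  have : ∃ a, a ∉ K ∧ ∀ x ∈ insert w C, ∃ K' : Finset (Fin n), K'.card = k + 1 ∧
      insert a ((insert w C).erase x) ⊆ K' ∧ t K' ≤ s := by
    by_contra hcon
    push Not at hcon
    exact h4 ⟨K, insert w C, hK, hPK, hPc, fun a ha => hcon a ha⟩
  obtain ⟨a, ha, hx⟩ := this
  refine not_conn_of_shell hj hK hC hCK hI hw ha ?_
  intro Q hQ
  rw [Finset.mem_powersetCard] at hQ
  have hQne : Q.Nonempty := by rw [← Finset.card_pos]; omega
  have haP : a ∉ insert w C := fun h => ha (hPK h)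
  by_cases haQ : a ∈ Q
  · have : ∃ x ∈ insert w C, x ∉ Q := by
      by_contra hcon
      push Not at hcon
      have h1 : insert a (insert w C) ⊆ Q := Finset.insert_subset haQ hcon
      have h2 := Finset.card_le_card h1
      rw [Finset.card_insert_of_notMem haP, hPc, hQ.2] at h2
      omega
    obtain ⟨x, hxP, hxQ⟩ := this
    obtain ⟨K', hK', hsub, ht⟩ := hx x hxP
    refine sub_mem hK' (ht.trans hsp) (fun y hy => hsub ?_) hQne
    rcases Finset.mem_insert.1 (hQ.1 hy) with h | h
    · exact Finset.mem_insert.2 (Or.inl h)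
    · refine Finset.mem_insert_of_mem (Finset.mem_erase.2 ⟨?_, h⟩)
      rintro rfl; exact hxQ hy
  · refine sub_mem hK hI.1 (fun y hy => ?_) hQne
    rcases Finset.mem_insert.1 (hQ.1 hy) with h | h
    · exact absurd (h ▸ hy) haQ
    · exact hPK h

lemma mem_good {k i n : ℕ} {a b : ℝ} {t : Finset (Fin n) → ℝ} {K : Finset (Fin n)}
    (h : K ∈ good k i n a b t) : K.card = k + 1 ∧ t ∈ EvI k n a b K (cen i K) := by
  rw [good, Finset.mem_filter, Finset.mem_powersetCard] at h
  exact ⟨h.1.2, h.2⟩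

lemma many_of_good {k i j n : ℕ} (hij : i ≤ j) (hik : i < k) {a b p : ℝ}
    {t : Finset (Fin n) → ℝ} (h : n.choose i < (good k i n a b t).card) (hap : a ≤ p)
    (hpb : p ≤ b) : ¬ CohomConnected (complexAt k n t p) j := by
  refine not_conn_of_many hij hik (good k i n a b t) (cen i) (fun K hK => (mem_good hK).1)
    (fun K hK => cen_card ?_) (fun K hK => cen_sub ?_)
    (fun K hK => iso_of_EvI (mem_good hK).2 hap hpb) h
  · have := (mem_good hK).1; omega
  · have := (mem_good hK).1; omega

lemma det {k j n : ℕ} (hk : 2 ≤ k) (hj : 1 ≤ j) (hjk : j < k) (hn : 2 ≤ n) (hT0 : 0 ≤ TT k j n)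
    (hsT : uu n ^ 3 / (n : ℝ) ^ (k - j) ≤ TT k j n)
    {t : Finset (Fin n) → ℝ} (h1 : t ∉ B1 k n (uu n ^ 3 / (n : ℝ) ^ (k + 1)))
    (hA : ∀ i ∈ Finset.range (j + 1), n.choose i <
      (good k i n (uu n ^ 3 / (n : ℝ) ^ (k - i + 1)) (1 / (n : ℝ) ^ (k - i)) t).card)
    (hB : ∀ i ∈ Finset.range (j + 1), n.choose i <
      (good k i n (1 / (n : ℝ) ^ (k - i)) (uu n ^ 3 / (n : ℝ) ^ (k - i)) t).card)
    (h3 : 0 < (good k j n (uu n ^ 3 / (n : ℝ) ^ (k - j)) (TT k j n) t).card)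
    (h4 : t ∉ B4 k j n (uu n ^ 3 / (n : ℝ) ^ (k - j)))
    (h5 : t ∉ B5 k j n (TT k j n)) (p : ℝ) (hp : p < pMj k j n t) :
    ¬ CohomConnected (complexAt k n t p) j := by
  have hQ : ∀ i, i ≤ j + 1 → p ≤ uu n ^ 3 / (n : ℝ) ^ (k + 1 - i) →
      ¬ CohomConnected (complexAt k n t p) j := by
    intro i
    induction i with
    | zero =>
      intro _ hp0
      have : ∃ v : Fin n, ∀ K : Finset (Fin n), K.card = k + 1 → v ∈ K →
          uu n ^ 3 / (n : ℝ) ^ (k + 1) < t K := by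
        by_contra hcon
        push Not at hcon
        exact h1 hcon
      obtain ⟨v, hv⟩ := this
      exact not_conn_of_isolated hn v fun K hK hvK => lt_of_le_of_lt hp0 (hv K hK hvK)
    | succ i ih =>
      intro hi hpi
      rcases le_total p (uu n ^ 3 / (n : ℝ) ^ (k + 1 - i)) with hc | hc
      · exact ih (by omega) hc
      · rw [show k + 1 - i = k - i + 1 by omega] at hc
        rw [show k + 1 - (i + 1) = k - i by omega] at hpi
        rcases le_total p (1 / (n : ℝ) ^ (k - i)) with hd | hd
        · exact many_of_good (by omega) (by omega) (hA i (Finset.mem_range.2 (by omega))) hc hd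
        · exact many_of_good (by omega) (by omega) (hB i (Finset.mem_range.2 (by omega))) hd hpi
  have hQj := hQ (j + 1) le_rfl
  rw [show k + 1 - (j + 1) = k - j by omega] at hQj
  rcases le_total p (uu n ^ 3 / (n : ℝ) ^ (k - j)) with hc | hc
  · exact hQj hc
  rcases le_or_gt p (TT k j n) with hd | hd
  · obtain ⟨K, hK⟩ := Finset.card_pos.1 h3
    have hKg := mem_good hK
    exact shell_of_good hj hjk h4 hc hKg.1 (cen_sub (by omega)) (cen_card (by omega))
      (iso_of_EvI hKg.2 hc hd)
  · set S := {p : ℝ | p ∈ Set.Icc (0 : ℝ) 1 ∧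
      ∃ K C J, IsMj (complexAt k n t p) k j K C J} with hS
    have hp' : p < sSup S := hp
    have hne : S.Nonempty := by
      by_contra hcon
      rw [Set.not_nonempty_iff_eq_empty] at hcon
      rw [hcon, Real.sSup_empty] at hp'
      linarith
    obtain ⟨p1, ⟨-, K, C, J, ⟨⟨hKG, hKc⟩, -, hC, hCK, hfl⟩, -⟩, hpp1⟩ := exists_lt_of_lt_csSup hne hp'
    obtain ⟨K2, hK2c, hK2t, hKK2⟩ := mem_complex_of_card hKG (by omega)
    have hK2 : K = K2 := Finset.eq_of_subset_of_card_le hKK2 (by omega)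
    have htK : t K ≤ p1 := hK2 ▸ hK2t
    have hiso : ∀ K' : Finset (Fin n), K'.card = k + 1 → t K' ≤ p1 → C ⊆ K' →
        (∃ w ∈ K \ C, w ∈ K') → K' = K := by
      rintro K' hK' ht' hCK' ⟨w, hw, hwK'⟩
      refine hfl _ ⟨w, hw, rfl⟩ K' ⟨sub_mem hK' ht' le_rfl ?_, hK'⟩ ?_
      · rw [← Finset.card_pos]; omega
      · exact Finset.insert_subset hwK' hCK'
    have htT : t K ≤ TT k j n := by
      by_contra hcon
      push Not at hcon
      refine h5 ⟨K, C, hKc, hCK, hC, hcon, fun K' hK' => ?_⟩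
      rw [nb, Finset.mem_filter, Finset.mem_powersetCard] at hK'
      by_contra hcon2
      push Not at hcon2
      exact hK'.2.1 (hiso K' hK'.1.2 (hcon2.trans htK) hK'.2.2.1 hK'.2.2.2)
    refine shell_of_good hj hjk h4 hc hKc hCK hC ⟨htT.trans hd.le, fun K' hK' ht' => ?_⟩
    exact hiso K' hK' (ht'.trans hpp1.le)

lemma whp_finish (S : ∀ n : ℕ, Set (Finset (Fin n) → ℝ)) (f : ℕ → ℝ)
    (hf : Tendsto f atTop (nhds 0)) (h : ∀ᶠ n in atTop, (birthMeasure n).real (S n)ᶜ ≤ f n) :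
    Tendsto (fun n => birthMeasure n (S n)) atTop (nhds 1) := by
  have hl : Tendsto (fun n => 1 - ENNReal.ofReal (f n)) atTop (nhds 1) := by
    have h1 : Tendsto (fun n => ENNReal.ofReal (f n)) atTop (nhds 0) := by
      simpa using ENNReal.tendsto_ofReal hf
    have h2 := ENNReal.Tendsto.sub (tendsto_const_nhds (x := (1 : ENNReal)) (f := atTop)) h1
      (Or.inl ENNReal.one_ne_top)
    simpa using h2
  refine tendsto_of_tendsto_of_tendsto_of_le_of_le' hl tendsto_const_nhds ?_ ?_
  · filter_upwards [h] with n hn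
    have := isProb_birth n
    have h1 : birthMeasure n (S n)ᶜ ≤ ENNReal.ofReal (f n) := by
      rw [← ofReal_measureReal (measure_ne_top _ _)]
      exact ENNReal.ofReal_le_ofReal hn
    have h2 : (1 : ENNReal) ≤ birthMeasure n (S n) + birthMeasure n (S n)ᶜ := by
      rw [← measure_univ (μ := birthMeasure n), ← Set.union_compl_self (S n)]
      exact measure_union_le _ _
    rw [tsub_le_iff_right]
    exact h2.trans (by gcongr)
  · exact Eventually.of_forall fun n => by
      have := isProb_birth n
      exact prob_le_one

end RSC
namespace RSC
/-- Theorem 1.5(ii): whp, for all `p < p_{M_j}` simultaneously, `G_p` is not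
`F₂`-cohomologically `j`-connected. -/
theorem statement1 (k j : ℕ) (hk : 2 ≤ k) (hj : 1 ≤ j) (hjk : j < k) :
    Tendsto (fun n : ℕ => birthMeasure n {t : Finset (Fin n) → ℝ |
      ∀ p : ℝ, p < pMj k j n t → ¬ CohomConnected (complexAt k n t p) j})
      atTop (nhds 1) := by
  have hA : Tendsto (fun n : ℕ => ∑ i ∈ Finset.range (j + 1), (birthMeasure n).real
      {t | (good k i n (uu n ^ 3 / (n : ℝ) ^ (k - i + 1)) (1 / (n : ℝ) ^ (k - i)) t).card ≤
        n.choose i}) atTop (nhds 0) := by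
    have := tendsto_finsetSum (Finset.range (j + 1)) (fun i hi =>
      whpA (k := k) (i := i) (by have := Finset.mem_range.1 hi; omega))
    simpa using this
  have hB : Tendsto (fun n : ℕ => ∑ i ∈ Finset.range (j + 1), (birthMeasure n).real
      {t | (good k i n (1 / (n : ℝ) ^ (k - i)) (uu n ^ 3 / (n : ℝ) ^ (k - i)) t).card ≤
        n.choose i}) atTop (nhds 0) := by
    have := tendsto_finsetSum (Finset.range (j + 1)) (fun i hi =>
      whpB (k := k) (i := i) (by have := Finset.mem_range.1 hi; omega))
    simpa using this
  have htot := (((((whp1 k).add hA).add hB).add (whp3 hjk)).add (whp4 hjk)).add (whp5 hjk)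
  simp only [add_zero] at htot
  refine whp_finish _ _ htot ?_
  filter_upwards [uu_ge 1, eventually_ge_atTop 2, s_le_T hjk] with n hu hn hsT
  have := isProb_birth n
  set bA : ℕ → Set (Finset (Fin n) → ℝ) := fun i =>
    {t | (good k i n (uu n ^ 3 / (n : ℝ) ^ (k - i + 1)) (1 / (n : ℝ) ^ (k - i)) t).card ≤
        n.choose i} with hbA
  set bB : ℕ → Set (Finset (Fin n) → ℝ) := fun i =>
    {t | (good k i n (1 / (n : ℝ) ^ (k - i)) (uu n ^ 3 / (n : ℝ) ^ (k - i)) t).card ≤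
        n.choose i} with hbB
  set b3 : Set (Finset (Fin n) → ℝ) :=
    {t | (good k j n (uu n ^ 3 / (n : ℝ) ^ (k - j)) (TT k j n) t).card ≤ 0} with hb3
  set b1 := B1 k n (uu n ^ 3 / (n : ℝ) ^ (k + 1)) with hb1
  set b4 := B4 k j n (uu n ^ 3 / (n : ℝ) ^ (k - j)) with hb4
  set b5 := B5 k j n (TT k j n) with hb5
  have hsub : {t : Finset (Fin n) → ℝ |
      ∀ p : ℝ, p < pMj k j n t → ¬ CohomConnected (complexAt k n t p) j}ᶜ ⊆
      ((((b1 ∪ ⋃ i ∈ Finset.range (j + 1), bA i) ∪ ⋃ i ∈ Finset.range (j + 1), bB i) ∪ b3) ∪ b4)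
        ∪ b5 := by
    intro t ht
    by_contra hcon
    simp only [Set.mem_union, not_or, Set.mem_iUnion, not_exists] at hcon
    obtain ⟨⟨⟨⟨⟨g1, gA⟩, gB⟩, g3⟩, g4⟩, g5⟩ := hcon
    apply ht
    intro p hp
    exact det hk hj hjk hn (TT_nonneg hu) hsT g1 (fun i hi => not_le.1 (gA i hi))
      (fun i hi => not_le.1 (gB i hi)) (not_le.1 g3) g4 g5 p hp
  refine (measureReal_mono hsub (measure_ne_top _ _)).trans ?_
  refine (measureReal_union_le _ _).trans (add_le_add ?_ le_rfl)
  refine (measureReal_union_le _ _).trans (add_le_add ?_ le_rfl)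
  refine (measureReal_union_le _ _).trans (add_le_add ?_ le_rfl)
  refine (measureReal_union_le _ _).trans (add_le_add ?_ ?_)
  · refine (measureReal_union_le _ _).trans (add_le_add le_rfl ?_)
    exact measureReal_biUnion_finset_le _ _
  · exact measureReal_biUnion_finset_le _ _

end RSC
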